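/- arXiv:2105.00254 — 6 statements merged into one kernel-verified Lean document; each statement's English description precedes it below -/
import Mathlib

section
/- Let G be a 2-connected graph, let e = uv be an edge of G, and let f : V(G) → {0,1} be a function with ∑_{z ∈ V(G)} f(z) even. If f(u) = 0 or f(v) = 0, then G has an f-parity perfect forest that does not contain the edge e. -/
open SimpleGraph

/-- The degree of `v` in `F`, defined via `Set.ncard` so that no decidability
instances are needed. -/
noncomputable def fdeg {V : Type*} (F : SimpleGraph V) (v : V) : ℕ :=
  (F.neighborSet v).ncard

/-- `F` is a semiperfect spanning forest of `G`: `F` is a spanning subgraph of `G`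
that is a forest, and every connected component of `F` is an induced subgraph of `G`. -/
def IsSemiperfectForest {V : Type*} (G F : SimpleGraph V) : Prop :=
  F ≤ G ∧ F.IsAcyclic ∧ ∀ x y : V, F.Reachable x y → G.Adj x y → F.Adj x y

/-!
Let `f u = 0`, the other case being symmetric. It suffices to find an `f`-parity perfect forest of
the connected graph `G - u`: adding `u` as an isolated vertex keeps all components induced in `G`.
Since the support `T` of `f` has even size, joining its vertices in pairs by paths and taking the
symmetric difference gives a `T`-join of `G - u`. Choose one, `F`, with as few edges as possible.
Exchanging a path of `F` for another path of `G - u` with the same ends yields again a `T`-join, so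
every path of `F` is a geodesic of `G - u`. A path between adjacent vertices is therefore a single
edge, which says both that `F` has no cycle and that its components are induced.
-/

open scoped symmDiff

theorem odd_ncard_symmDiff_iff {α : Type*} {A B : Set α} (hA : A.Finite) (hB : B.Finite) :
    Odd (A ∆ B).ncard ↔ Xor (Odd A.ncard) (Odd B.ncard) := by
  have hunion : (A ∆ B).ncard = (A \ B).ncard + (B \ A).ncard :=
    Set.ncard_union_eq disjoint_sdiff_sdiff hA.sdiff hB.sdiff
  have hsplitA := Set.ncard_inter_add_ncard_sdiff_eq_ncard A B hA
  have hsplitB := Set.ncard_inter_add_ncard_sdiff_eq_ncard B A hB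
  rw [Set.inter_comm] at hsplitB
  grind [Xor]

theorem finsum_eq_ncard_support {α : Type*} {f : α → ℕ} (hf : ∀ a, f a ≤ 1) :
    ∑ᶠ a, f a = f.support.ncard := by
  have hone : ∀ a ∈ f.support, f a = 1 := fun a ha ↦
    (hf a).antisymm (Nat.one_le_iff_ne_zero.2 ha)
  rw [← finsum_mem_support, finsum_mem_congr rfl hone, finsum_one]

section Degree

variable {V : Type*} {F F' : SimpleGraph V}

theorem fdeg_eq_ncard_incidenceSet (F : SimpleGraph V) (w : V) :
    fdeg F w = (F.incidenceSet w).ncard := by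
  classical exact (Nat.card_congr (F.incidenceSetEquivNeighborSet w)).symm

theorem finite_neighborSet_of_finite_edgeSet (hF : F.edgeSet.Finite) (w : V) :
    (F.neighborSet w).Finite := by
  classical
  have := (hF.subset (F.incidenceSet_subset w)).to_subtype
  exact Finite.of_equiv _ (F.incidenceSetEquivNeighborSet w)

theorem odd_fdeg_symmDiff_iff (hF : F.edgeSet.Finite) (hF' : F'.edgeSet.Finite) (w : V) :
    Odd (fdeg (F ∆ F') w) ↔ Xor (Odd (fdeg F w)) (Odd (fdeg F' w)) :=
  odd_ncard_symmDiff_iff (finite_neighborSet_of_finite_edgeSet hF w)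
    (finite_neighborSet_of_finite_edgeSet hF' w)

end Degree

section Trail

variable {V : Type*} {G : SimpleGraph V} {x y : V} {p : G.Walk x y}

theorem finite_walk_edgeSet (p : G.Walk x y) : p.edgeSet.Finite :=
  p.edges.finite_toSet

theorem ncard_trail_edgeSet (hp : p.IsTrail) : p.edgeSet.ncard = p.length := by
  classical
  rw [← p.length_edges, ← List.toFinset_card_of_nodup hp.edges_nodup, ← Set.ncard_coe_finset]
  simp [Walk.edgeSet]

theorem fdeg_trail [DecidableEq V] (hp : p.IsTrail) (w : V) :
    fdeg p.toSubgraph.spanningCoe w = p.edges.countP (w ∈ ·) := by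
  have hincidence : p.toSubgraph.spanningCoe.incidenceSet w =
      (p.edges.filter (w ∈ ·)).toFinset := by
    ext e
    simp [incidenceSet]
  rw [fdeg_eq_ncard_incidenceSet, hincidence, Set.ncard_coe_finset,
    List.toFinset_card_of_nodup (hp.edges_nodup.filter _), List.countP_eq_length_filter]

theorem odd_fdeg_trail_iff (hp : p.IsTrail) (w : V) :
    Odd (fdeg p.toSubgraph.spanningCoe w) ↔ w ∈ ({x} ∆ {y} : Set V) := by
  classical
  rw [fdeg_trail hp, ← Nat.not_even_iff_odd, hp.even_countP_edges_iff]
  grind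

theorem ncard_edgeSet_symmDiff_trails_add_length_le {F : SimpleGraph V} (hF : F.edgeSet.Finite)
    {p : F.Walk x y} (hp : p.IsTrail) {q : G.Walk x y} (hq : q.IsTrail) :
    (F ∆ p.toSubgraph.spanningCoe ∆ q.toSubgraph.spanningCoe).edgeSet.ncard + p.length ≤
      F.edgeSet.ncard + q.length := by
  have hpF : p.edgeSet ⊆ F.edgeSet := p.edges_subset_edgeSet
  have hle : F ∆ p.toSubgraph.spanningCoe ∆ q.toSubgraph.spanningCoe ≤
      F \ p.toSubgraph.spanningCoe ⊔ q.toSubgraph.spanningCoe :=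
    symmDiff_le_sup.trans (by rw [symmDiff_of_ge p.toSubgraph.spanningCoe_le])
  calc
    _ ≤ (F.edgeSet \ p.edgeSet ∪ q.edgeSet).ncard + p.length := by
      gcongr
      · exact hF.sdiff.union (finite_walk_edgeSet q)
      · simpa only [edgeSet_sup, edgeSet_sdiff, Subgraph.edgeSet_spanningCoe,
          Walk.edgeSet_toSubgraph] using edgeSet_mono hle
    _ ≤ (F.edgeSet \ p.edgeSet).ncard + q.edgeSet.ncard + p.edgeSet.ncard := by
      rw [ncard_trail_edgeSet hp]
      gcongr
      exact Set.ncard_union_le _ _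
    _ = F.edgeSet.ncard + q.length := by
      rw [add_right_comm, Set.ncard_sdiff_add_ncard_of_subset hpF hF, ncard_trail_edgeSet hq]

end Trail

/-- `F` is a `T`-join of `G`: a subgraph with finitely many edges whose vertices of odd degree are
exactly those of `T`. It encodes an `f`-parity subgraph, with `T` the support of `f`; on an infinite
vertex set, finiteness keeps `fdeg` away from the junk value `0` of `Set.ncard`. -/
structure IsTJoin {V : Type*} (G : SimpleGraph V) (T : Set V) (F : SimpleGraph V) : Prop where
  le : F ≤ G
  finite : F.edgeSet.Finite
  odd_fdeg_iff (w : V) : Odd (fdeg F w) ↔ w ∈ T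

namespace IsTJoin

variable {V : Type*} {G F F' : SimpleGraph V} {S T : Set V} {x y : V}

theorem bot : IsTJoin G ∅ ⊥ where
  le := bot_le
  finite := by simp
  odd_fdeg_iff w := by simp [fdeg]

protected theorem symmDiff (hF : IsTJoin G S F) (hF' : IsTJoin G T F') :
    IsTJoin G (S ∆ T) (F ∆ F') where
  le := symmDiff_le_sup.trans (sup_le hF.le hF'.le)
  finite := (hF.finite.union hF'.finite).subset <| by
    rw [← edgeSet_sup]
    exact edgeSet_mono symmDiff_le_sup
  odd_fdeg_iff w := by
    rw [odd_fdeg_symmDiff_iff hF.finite hF'.finite, hF.odd_fdeg_iff, hF'.odd_fdeg_iff]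
    rfl

theorem of_isTrail {p : G.Walk x y} (hp : p.IsTrail) :
    IsTJoin G ({x} ∆ {y}) p.toSubgraph.spanningCoe where
  le := p.toSubgraph.spanningCoe_le
  finite := by simpa using finite_walk_edgeSet p
  odd_fdeg_iff := odd_fdeg_trail_iff hp

theorem mono {H : SimpleGraph V} (hGH : G ≤ H) (hF : IsTJoin G T F) : IsTJoin H T F :=
  ⟨hF.le.trans hGH, hF.finite, hF.odd_fdeg_iff⟩

theorem exists_of_even_ncard (hT : T.Finite) (heven : Even T.ncard)
    (hreach : ∀ x ∈ T, ∀ y ∈ T, G.Reachable x y) : ∃ F, IsTJoin G T F := by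
  obtain ⟨n, hn⟩ := heven
  induction n generalizing T with
  | zero =>
    obtain rfl := (Set.ncard_eq_zero hT).1 hn
    exact ⟨⊥, bot⟩
  | succ n ih =>
    obtain ⟨x, hx, y, hy, hxy⟩ := (Set.one_lt_ncard hT).1 (by omega)
    have hpair : ({x, y} : Set V) ⊆ T := Set.pair_subset hx hy
    have hcard := Set.ncard_sdiff_add_ncard_of_subset hpair hT
    rw [Set.ncard_pair hxy] at hcard
    obtain ⟨F, hF⟩ := ih (T := T \ {x, y}) hT.sdiff
      (fun a ha b hb ↦ hreach a ha.1 b hb.1) (by omega)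
    obtain ⟨p, hp⟩ := (hreach x hx y hy).exists_isPath
    have hsymmDiff : (T \ {x, y}) ∆ ({x} ∆ {y}) = T := by
      ext w
      grind
    exact ⟨_, hsymmDiff ▸ hF.symmDiff (of_isTrail hp.isTrail)⟩

theorem symmDiff_trails (hF : IsTJoin G T F) {p : F.Walk x y} (hp : p.IsTrail) {q : G.Walk x y}
    (hq : q.IsTrail) :
    IsTJoin G T (F ∆ p.toSubgraph.spanningCoe ∆ q.toSubgraph.spanningCoe) := by
  simpa only [symmDiff_symmDiff_cancel_right] using
    (hF.symmDiff ((of_isTrail hp).mono hF.le)).symmDiff (of_isTrail hq)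

theorem length_le_dist_of_minimalFor
    (hF : MinimalFor (IsTJoin G T) (fun F ↦ F.edgeSet.ncard) F) {p : F.Walk x y}
    (hp : p.IsTrail) : p.length ≤ G.dist x y := by
  obtain ⟨q, hq, hdist⟩ := (p.reachable.mono hF.prop.le).exists_path_of_dist
  have hmin := hF.le_of_le (hF.prop.symmDiff_trails hp hq.isTrail)
  have hexchange := ncard_edgeSet_symmDiff_trails_add_length_le hF.prop.finite hp hq.isTrail
  omega

end IsTJoin

section Semiperfect

variable {V : Type*} {G F : SimpleGraph V} {s : Set V}

theorem isSemiperfectForest_of_length_le_dist (hFG : F ≤ G)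
    (hgeodesic : ∀ ⦃x y : V⦄ (p : F.Walk x y), p.IsPath → p.length ≤ G.dist x y) :
    IsSemiperfectForest G F := by
  refine ⟨hFG, fun x c hc ↦ ?_, fun x y hreach hadj ↦ ?_⟩
  · cases c with
    | nil => exact hc.not_nil Walk.nil_nil
    | cons hadj p =>
      have hlength := hgeodesic p ((Walk.cons_isCycle_iff p hadj).1 hc).1
      rw [dist_eq_one_iff_adj.2 (hFG hadj).symm] at hlength
      have hthree := hc.three_le_length
      rw [Walk.length_cons] at hthree
      omega
  · obtain ⟨p, hp⟩ := hreach.exists_isPath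
    have hlength := hgeodesic p hp
    rw [dist_eq_one_iff_adj.2 hadj] at hlength
    refine p.adj_of_length_eq_one (hlength.antisymm ?_)
    exact Nat.one_le_iff_ne_zero.2 fun hzero ↦ hadj.ne (p.eq_of_length_eq_zero hzero)

theorem support_spanningCoe_induce_subset : (G.induce s).spanningCoe.support ⊆ s := by
  rw [support_spanningCoe]
  exact Subtype.coe_image_subset s _

theorem isSemiperfectForest_of_spanningCoe_induce
    (hF : IsSemiperfectForest (G.induce s).spanningCoe F) : IsSemiperfectForest G F := by
  obtain ⟨hle, hacyclic, hinduced⟩ := hF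
  have hsupport : F.support ⊆ s := (support_mono hle).trans support_spanningCoe_induce_subset
  refine ⟨hle.trans (spanningCoe_induce_le G s), hacyclic, fun x y hreach hadj ↦ ?_⟩
  have hx : x ∈ s := hsupport (mem_support_of_reachable hadj.ne hreach)
  have hy : y ∈ s := hsupport (mem_support_of_reachable hadj.ne' hreach.symm)
  exact hinduced x y hreach (by simp [hx, hy, hadj])

end Semiperfect

theorem exists_isTJoin_isSemiperfectForest {V : Type*} {G : SimpleGraph V} {T : Set V}
    (hT : T.Finite) (heven : Even T.ncard) (hreach : ∀ x ∈ T, ∀ y ∈ T, G.Reachable x y) :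
    ∃ F, IsTJoin G T F ∧ IsSemiperfectForest G F := by
  obtain ⟨F, hF⟩ := exists_minimalFor_of_wellFoundedLT (IsTJoin G T)
    (fun F ↦ F.edgeSet.ncard) (IsTJoin.exists_of_even_ncard hT heven hreach)
  exact ⟨F, hF.prop, isSemiperfectForest_of_length_le_dist hF.prop.le fun _ _ _ hp ↦
    IsTJoin.length_le_dist_of_minimalFor hF hp.isTrail⟩

theorem parity_forest_avoiding_edge_of_two_connected_general {V : Type*} (G : SimpleGraph V)
    (s : Set V) (hs : (G.induce s).Preconnected)
    (f : V → ℕ) (hf01 : ∀ w, f w ≤ 1) (hfin : f.support.Finite) (hfsum : Even (∑ᶠ w, f w))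
    (hfs : f.support ⊆ s) :
    ∃ F : SimpleGraph V, IsSemiperfectForest G F ∧ F.edgeSet.Finite ∧
      (∀ w : V, fdeg F w % 2 = f w) ∧ F.support ⊆ s := by
  have hreach : ∀ x ∈ f.support, ∀ y ∈ f.support, (G.induce s).spanningCoe.Reachable x y :=
    fun x hx y hy ↦ (hs ⟨x, hfs hx⟩ ⟨y, hfs hy⟩).map (Embedding.spanningCoe _).toHom
  obtain ⟨F, hF, hforest⟩ := exists_isTJoin_isSemiperfectForest hfin
    (finsum_eq_ncard_support hf01 ▸ hfsum) hreach
  refine ⟨F, isSemiperfectForest_of_spanningCoe_induce hforest, hF.finite, fun w ↦ ?_,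
    (support_mono hF.le).trans support_spanningCoe_induce_subset⟩
  have hodd := hF.odd_fdeg_iff w
  rw [Nat.odd_iff, Function.mem_support] at hodd
  have := hf01 w
  omega

/-- Let `G` be a 2-connected graph (at least 3 vertices, connected, and connected after
deleting any single vertex), let `e = uv ∈ E(G)`, and let `f : V → {0,1}` be even-sum.
If `f(u) = 0` or `f(v) = 0`, then `G` has an `f`-parity perfect forest not containing `e`. -/
theorem parity_forest_avoiding_edge_of_two_connected {V : Type*} [Fintype V]
    (G : SimpleGraph V) (h3 : 3 ≤ Fintype.card V) (hconn : G.Connected)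
    (h2 : ∀ x : V, (G.induce (({x} : Set V)ᶜ)).Connected)
    (u v : V) (huv : G.Adj u v)
    (f : V → ℕ) (hf01 : ∀ w, f w ≤ 1) (hfsum : Even (∑ w, f w))
    (hf0 : f u = 0 ∨ f v = 0) :
    ∃ F : SimpleGraph V, IsSemiperfectForest G F ∧
      (∀ w : V, fdeg F w % 2 = f w) ∧ ¬ F.Adj u v := by
  obtain ⟨x, hx, hfx⟩ : ∃ x, (x = u ∨ x = v) ∧ f x = 0 := by simpa
  obtain ⟨F, hforest, -, hparity, hsupport⟩ :=
    parity_forest_avoiding_edge_of_two_connected_general G {x}ᶜ (h2 x).preconnected f hf01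
      f.support.toFinite (finsum_eq_sum_of_fintype f ▸ hfsum) (by simpa using hfx)
  exact ⟨F, hforest, hparity, fun hadj ↦ hx.elim
    (hsupport hadj.mem_support_left ·.symm) (hsupport hadj.mem_support_right ·.symm)⟩
end

section
/- Let G be a 2-connected graph, let e = uv be an edge of G, and let f : V(G) → {0,1} be a function with ∑_{z ∈ V(G)} f(z) even and f(u) = f(v) = 1. Then G has an f-parity perfect forest not containing the edge e if and only if ∑_{z ∈ V(G)} f(z) ≥ 4. -/
open SimpleGraph

/-!
The vertices of odd degree in `F` form a set `T = f⁻¹(1)`, i.e. `F` is a `T`-join. If a perfect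
forest misses the edge `uv`, then `u` and `v` lie in different components of it, and by the
handshaking lemma each component contains an even number of elements of `T`, so `|T| ≥ 4`.

Conversely, 2-connectedness allows one to grow `{u}` vertex by vertex to `V \ {v}` so that each
intermediate set and its complement induce connected subgraphs. One of these sets contains exactly
two elements of `T`; joining up the elements of `T` inside each part gives a `T`-join in which `u`
and `v` are not connected. Among the `T`-joins whose components refine those of this one, a join
with the fewest edges is a perfect forest: a path of it between the ends of an edge of `G` could
otherwise be exchanged for that edge.
-/

open scoped symmDiff

section Connectivity

variable {V : Type*} {G : SimpleGraph V} {S X : Set V} {x y : V}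

theorem mem_of_reachable_of_forall_adj_mem (hS : ∀ a b, G.Adj a b → a ∈ S → b ∈ S)
    (h : G.Reachable x y) (hx : x ∈ S) : y ∈ S := by
  by_contra hy
  obtain ⟨d, -, hfst, hsnd⟩ := h.some.exists_boundary_dart S hx hy
  exact hsnd (hS _ _ d.adj hfst)

theorem exists_adj_mem_sdiff_of_preconnected_induce (hS : (G.induce S).Preconnected)
    (hX : X.Nonempty) (hXS : X ⊂ S) : ∃ a ∈ X, ∃ b ∈ S \ X, G.Adj a b := by
  obtain ⟨x, hx⟩ := hX
  obtain ⟨y, hyS, hy⟩ := Set.exists_of_ssubset hXS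
  obtain ⟨d, -, hfst, hsnd⟩ := (hS ⟨x, hXS.subset hx⟩ ⟨y, hyS⟩).some.exists_boundary_dart
    (Subtype.val ⁻¹' X) hx hy
  exact ⟨d.fst, hfst, d.snd, ⟨d.snd.2, hsnd⟩, d.adj⟩

theorem connected_induce_insert (hS : (G.induce S).Preconnected) (hx : x ∈ S)
    (hxy : G.Adj x y) : (G.induce (insert y S)).Connected := by
  rw [← Set.union_singleton]
  exact connected_induce_union hS Preconnected.of_subsingleton hx rfl hxy

end Connectivity

section ConnectedBipartition

variable {V : Type*} {G : SimpleGraph V} {u v : V} {A : Set V}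

/-- The vertex sets `A ∋ u` and `Aᶜ ∋ v` both induce connected subgraphs of `G`. Growing `A` one
vertex at a time through such bipartitions plays the role of an `st`-numbering of `G`. -/
structure IsConnectedBipartition {V : Type*} (G : SimpleGraph V) (u v : V) (A : Set V) :
    Prop where
  mem : u ∈ A
  notMem : v ∉ A
  connected : (G.induce A).Connected
  connected_compl : (G.induce Aᶜ).Connected

namespace IsConnectedBipartition

theorem exists_adj_mem_compl_sdiff_singleton (hA : IsConnectedBipartition G u v A)
    (hGv : (G.induce {v}ᶜ).Preconnected) (hne : Aᶜ ≠ {v}) :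
    ∃ d ∈ Aᶜ \ {v}, ∃ a ∈ A, G.Adj a d := by
  have hAv : A ⊂ {v}ᶜ :=
    (Set.subset_compl_singleton_iff.2 hA.notMem).ssubset_of_ne fun h => hne (by rw [h, compl_compl])
  obtain ⟨a, ha, d, ⟨hdv, hdA⟩, had⟩ :=
    exists_adj_mem_sdiff_of_preconnected_induce hGv ⟨u, hA.mem⟩ hAv
  exact ⟨d, ⟨hdA, hdv⟩, a, ha, had⟩

-- Take `K ∋ v` connected in `Aᶜ` and maximal such that a neighbour of `A` remains in `Aᶜ \ K`. A
-- vertex `l` of `Aᶜ \ K` adjacent to `K` is then the only neighbour of `A` in `Aᶜ \ K`.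
-- As `G - l` is connected, any further vertices of `Aᶜ \ K` would be joined to `K`, not to `A`,
-- and one of them could be added to `K`.
theorem exists_insert [Finite V] (hA : IsConnectedBipartition G u v A)
    (hG : ∀ x, (G.induce {x}ᶜ).Preconnected) (hne : Aᶜ ≠ {v}) :
    ∃ b ∉ A, IsConnectedBipartition G u v (insert b A) := by
  obtain ⟨K, ⟨hKA, hvK, hK, b, ⟨hbA, hbK⟩, a, ha, hab⟩, hmax⟩ :=
    (Set.toFinite {K | K ⊆ Aᶜ ∧ v ∈ K ∧ (G.induce K).Connected ∧
      ∃ d ∈ Aᶜ \ K, ∃ a ∈ A, G.Adj a d}).exists_maximal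
      ⟨{v}, Set.singleton_subset_iff.2 hA.notMem, rfl, ⟨Preconnected.of_subsingleton⟩,
        hA.exists_adj_mem_compl_sdiff_singleton (hG v) hne⟩
  have unique_of_adj : ∀ k ∈ K, ∀ l ∈ Aᶜ \ K, G.Adj k l →
      ∀ c ∈ A, ∀ d ∈ Aᶜ \ K, G.Adj c d → d = l := by
    intro k hk l hl hkl c hc d hd hcd
    by_contra hdl
    exact hl.2 <| hmax ⟨Set.insert_subset hl.1 hKA, .inr hvK,
      connected_induce_insert hK.preconnected hk hkl, d, ⟨hd.1, not_or.2 ⟨hdl, hd.2⟩⟩, c, hc, hcd⟩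
      (Set.subset_insert l K) (Set.mem_insert l K)
  obtain ⟨k, hk, l, hl, hkl⟩ := exists_adj_mem_sdiff_of_preconnected_induce
    hA.connected_compl.preconnected ⟨v, hvK⟩ (hKA.ssubset_of_mem_notMem hbA hbK)
  obtain rfl : b = l := unique_of_adj k hk l hl hkl a ha b ⟨hbA, hbK⟩ hab
  have compl_eq : (insert b A)ᶜ = K := by
    have hKb : K ⊆ (insert b A)ᶜ := fun z hz => not_or.2 ⟨fun h => hbK (h ▸ hz), hKA hz⟩
    refine (hKb.antisymm (Set.sdiff_eq_empty.1 (Set.not_nonempty_iff_eq_empty.1 fun hL => ?_))).symm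
    have hLb : (insert b A)ᶜ \ K ⊂ {b}ᶜ :=
      LE.le.ssubset_of_mem_notMem (a := u) (by grind) (ne_of_mem_of_not_mem hA.mem hbA)
        fun h => h.1 (.inr hA.mem)
    obtain ⟨m, ⟨hmA, hmK⟩, c, ⟨hcb, hcL⟩, hmc⟩ :=
      exists_adj_mem_sdiff_of_preconnected_induce (hG b) hL hLb
    have hm : m ∈ Aᶜ \ K := ⟨fun h => hmA (.inr h), hmK⟩
    have hmb : m ≠ b := fun h => hmA (.inl h)
    by_cases hcA : c ∈ A
    · exact hmb (unique_of_adj k hk b hl hkl c hcA m hm hmc.symm)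
    · have hcK : c ∈ K := by_contra fun hcK => hcL ⟨not_or.2 ⟨hcb, hcA⟩, hcK⟩
      exact hmb (unique_of_adj c hcK m hm hmc.symm a ha b hl hab).symm
  exact ⟨b, hbA, .inr hA.mem, fun h => compl_eq.symm.subset hvK h,
    connected_induce_insert hA.connected.preconnected ha hab, compl_eq ▸ hK⟩

theorem exists_ncard_inter_eq [Finite V] (hG : ∀ x, (G.induce {x}ᶜ).Connected) (huv : u ≠ v)
    {T : Set V} {k : ℕ} (huk : (T ∩ {u}).ncard ≤ k) (hkT : k ≤ (T \ {v}).ncard) :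
    ∃ A, IsConnectedBipartition G u v A ∧ (T ∩ A).ncard = k := by
  obtain ⟨A, ⟨hA, hAk⟩, hmax⟩ :=
    (Set.toFinite {A | IsConnectedBipartition G u v A ∧ (T ∩ A).ncard ≤ k}).exists_maximal
      ⟨{u}, ⟨rfl, huv.symm, ⟨Preconnected.of_subsingleton⟩, hG u⟩, huk⟩
  refine ⟨A, hA, hAk.antisymm (not_lt.1 fun hlt => ?_)⟩
  have hne : Aᶜ ≠ {v} := by
    intro h
    rw [← compl_compl A, h, ← Set.sdiff_eq] at hlt
    exact hlt.not_ge hkT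
  obtain ⟨b, hb, hbA⟩ := hA.exists_insert (fun x => (hG x).preconnected) hne
  have hle : (T ∩ insert b A).ncard ≤ k :=
    calc (T ∩ insert b A).ncard ≤ (insert b (T ∩ A)).ncard := Set.ncard_le_ncard (by grind)
      _ ≤ (T ∩ A).ncard + 1 := Set.ncard_insert_le b _
      _ ≤ k := hlt
  exact hb (hmax ⟨hbA, hle⟩ (Set.subset_insert b A) (Set.mem_insert b A))

end IsConnectedBipartition

end ConnectedBipartition

section TJoin

variable {V : Type*} {G F H : SimpleGraph V} {S T : Set V} {x y : V}

/-- `F` is a `T`-join: `T` is the set of vertices of odd degree in `F`. An `f`-parity subgraph for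
a `{0,1}`-valued `f` is an `f⁻¹(1)`-join. -/
def IsTJoin_s13 {V : Type*} (F : SimpleGraph V) (T : Set V) : Prop :=
  ∀ w, Odd (fdeg F w) ↔ w ∈ T

theorem odd_ncard_symmDiff {α : Type*} {s t : Set α} (hs : s.Finite) (ht : t.Finite) :
    Odd (s ∆ t).ncard ↔ Xor (Odd s.ncard) (Odd t.ncard) := by
  have hst : (s ∆ t).ncard = (s \ t).ncard + (t \ s).ncard :=
    Set.ncard_union_eq disjoint_sdiff_sdiff hs.sdiff ht.sdiff
  have hs' := Set.ncard_inter_add_ncard_sdiff_eq_ncard s t hs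
  have ht' := Set.ncard_inter_add_ncard_sdiff_eq_ncard t s ht
  rw [Set.inter_comm] at ht'
  rw [hst, ← hs', ← ht']
  grind

theorem isTJoin_bot : IsTJoin_s13 (⊥ : SimpleGraph V) ∅ := fun w => by simp [fdeg]

theorem fdeg_eq_degree (F : SimpleGraph V) (w : V) [Fintype (F.neighborSet w)] :
    fdeg F w = F.degree w := by
  rw [fdeg, Set.ncard_eq_toFinset_card', ← card_neighborFinset_eq_degree]
  rfl

theorem isTJoin_edge (x y : V) : IsTJoin_s13 (edge x y) ({x} ∆ {y}) := by
  obtain rfl | hxy := eq_or_ne x y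
  · simpa using isTJoin_bot (V := V)
  intro w
  by_cases hwx : w = x
  · have hN : (edge x y).neighborSet w = {y} := by ext z; simp only [mem_neighborSet]; grind
    rw [fdeg, hN]
    grind [Set.ncard_singleton]
  by_cases hwy : w = y
  · have hN : (edge x y).neighborSet w = {x} := by ext z; simp only [mem_neighborSet]; grind
    rw [fdeg, hN]
    grind [Set.ncard_singleton]
  · have hN : (edge x y).neighborSet w = ∅ := by ext z; simp only [mem_neighborSet]; grind
    rw [fdeg, hN]
    grind [Set.ncard_empty]

namespace IsTJoin_s13

theorem symmDiff_s13 [Finite V] (hF : IsTJoin_s13 F S) (hH : IsTJoin_s13 H T) : IsTJoin_s13 (F ∆ H) (S ∆ T) := by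
  intro w
  have hN : (F ∆ H).neighborSet w = F.neighborSet w ∆ H.neighborSet w := by
    ext z; simp [symmDiff_def]
  rw [fdeg, hN, odd_ncard_symmDiff (Set.toFinite _) (Set.toFinite _), Set.mem_symmDiff,
    ← hF w, ← hH w]
  rfl

theorem even_ncard [Finite V] (hF : IsTJoin_s13 F T) : Even T.ncard := by
  classical
  have := Fintype.ofFinite V
  have hT : T = {w | Odd (F.degree w)} := by
    ext w; rw [← hF w, fdeg_eq_degree]; rfl
  rw [hT, Set.ncard_eq_toFinset_card', Set.toFinset_ofPred]
  exact F.even_card_odd_degree_vertices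

theorem induce (hF : IsTJoin_s13 F T) (hS : ∀ a b, F.Adj a b → a ∈ S → b ∈ S) :
    IsTJoin_s13 (F.induce S) (Subtype.val ⁻¹' T) := by
  intro w
  have hdeg : fdeg (F.induce S) w = fdeg F w :=
    Set.ncard_preimage_of_injective_subset_range Subtype.val_injective fun z hz =>
      Subtype.range_val ▸ hS _ _ hz w.2
  rw [hdeg, hF]; rfl

theorem even_ncard_inter [Finite V] (hF : IsTJoin_s13 F T) (hS : ∀ a b, F.Adj a b → a ∈ S → b ∈ S) :
    Even (T ∩ S).ncard := by
  have h := (hF.induce hS).even_ncard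
  rwa [← Set.ncard_image_of_injective _ Subtype.val_injective, Subtype.image_preimage_coe,
    Set.inter_comm] at h

theorem exists_adj (hF : IsTJoin_s13 F T) (hx : x ∈ T) : ∃ z, F.Adj x z :=
  Set.nonempty_of_ncard_ne_zero ((hF x).2 hx).pos.ne'

theorem two_le_ncard_edgeSet [Finite V] (hF : IsTJoin_s13 F T) (hx : x ∈ T) (hy : y ∈ T) (hxy : x ≠ y)
    (hadj : ¬ F.Adj x y) : 2 ≤ F.edgeSet.ncard := by
  obtain ⟨a, ha⟩ := hF.exists_adj hx
  obtain ⟨b, hb⟩ := hF.exists_adj hy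
  refine (Set.one_lt_ncard).2 ⟨s(x, a), ha, s(y, b), hb, fun h => ?_⟩
  grind

end IsTJoin_s13

theorem exists_isTJoin_pair_of_reachable [Finite V] (h : G.Reachable x y) :
    ∃ P ≤ G, IsTJoin_s13 P ({x} ∆ {y}) := by
  obtain ⟨p⟩ := h
  induction p with
  | nil => exact ⟨⊥, bot_le, by simpa using isTJoin_bot⟩
  | @cons x y z hxy _ ih =>
    obtain ⟨P, hPG, hP⟩ := ih
    have hedge : edge x y ≤ G := (edge_le_iff _).2 (.inr hxy)
    refine ⟨edge x y ∆ P, symmDiff_le_sup.trans (sup_le hedge hPG), ?_⟩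
    simpa only [symmDiff_assoc, symmDiff_symmDiff_cancel_left] using (isTJoin_edge x y).symmDiff_s13 hP

theorem exists_isTJoin_of_even_ncard [Finite V] (hT : Even T.ncard)
    (hreach : ∀ x ∈ T, ∀ y ∈ T, G.Reachable x y) : ∃ F ≤ G, IsTJoin_s13 F T := by
  induction hn : T.ncard using Nat.strong_induction_on generalizing T with
  | _ n ih =>
  obtain rfl | ⟨x, hx⟩ := T.eq_empty_or_nonempty
  · exact ⟨⊥, bot_le, isTJoin_bot⟩
  obtain ⟨y, hy, hyx⟩ : ∃ y ∈ T, y ≠ x := by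
    refine Set.exists_ne_of_one_lt_ncard ?_ x
    have := (Set.ncard_pos).2 ⟨x, hx⟩
    grind
  have hpair : {x} ∆ {y} = ({x, y} : Set V) := by
    grind
  have hcard : (T \ {x, y}).ncard + 2 = T.ncard := by
    rw [← Set.ncard_pair hyx.symm, Set.ncard_sdiff_add_ncard_of_subset (by grind)]
  obtain ⟨F, hFG, hF⟩ := ih (T \ {x, y}).ncard (by omega) (by grind)
    (fun a ha b hb => hreach a ha.1 b hb.1) rfl
  obtain ⟨P, hPG, hP⟩ := exists_isTJoin_pair_of_reachable (hreach x hx y hy)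
  refine ⟨F ∆ P, symmDiff_le_sup.trans (sup_le hFG hPG), ?_⟩
  convert hF.symmDiff_s13 hP using 1
  grind

end TJoin

section SemiperfectForest

variable {V : Type*} {G F : SimpleGraph V} {T : Set V} {u v x y : V}

theorem isSemiperfectForest_of_forall_adj_isBridge (hFG : F ≤ G)
    (hbridge : ∀ x y, G.Adj x y → F.IsBridge s(x, y)) : IsSemiperfectForest G F :=
  ⟨hFG, isAcyclic_iff_forall_adj_isBridge.2 fun x y hxy => hbridge x y (hFG hxy),
    fun x y hreach hxy => (hbridge x y hxy).reachable_iff_adj.1 hreach⟩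

theorem reachable_of_reachable_sup_edge (hxy : F.Reachable x y)
    (h : (F ⊔ edge x y).Reachable u v) : F.Reachable u v := by
  refine mem_of_reachable_of_forall_adj_mem (S := {w | F.Reachable u w}) ?_ h (Reachable.refl u)
  rintro a b (hab | hab) ha
  · exact ha.trans hab.reachable
  · obtain ⟨⟨rfl, rfl⟩ | ⟨rfl, rfl⟩, -⟩ := (edge_adj ..).1 hab
    · exact ha.trans hxy
    · exact ha.trans hxy.symm

-- Let `P` be an `{x, y}`-join in `F` avoiding the edge `xy`. Replacing `P` by `xy` in `F` removes
-- at least two edges and inserts at most one, whether or not `xy` lies in `F`.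
theorem IsTJoin_s13.exists_ncard_edgeSet_lt [Finite V] (hF : IsTJoin_s13 F T) (hxy : x ≠ y)
    (h : ¬ F.IsBridge s(x, y)) :
    ∃ H ≤ F ⊔ edge x y, IsTJoin_s13 H T ∧ H.edgeSet.ncard < F.edgeSet.ncard := by
  rw [isBridge_iff, not_not] at h
  obtain ⟨P, hPF', hP⟩ := exists_isTJoin_pair_of_reachable h
  have hPF : P ≤ F := hPF'.trans (deleteEdges_le _)
  have hPxy : ¬ P.Adj x y := fun hadj => by simpa using hPF' hadj
  have hle : F ∆ (P ∆ edge x y) ≤ (F \ P) ⊔ edge x y := by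
    rw [← symmDiff_assoc, symmDiff_of_ge hPF]
    exact symmDiff_le_sup
  refine ⟨F ∆ (P ∆ edge x y), hle.trans (sup_le_sup_right sdiff_le _), ?_, ?_⟩
  · simpa only [symmDiff_self, symmDiff_bot] using hF.symmDiff_s13 (hP.symmDiff_s13 (isTJoin_edge x y))
  · have hPcard : 2 ≤ P.edgeSet.ncard :=
      hP.two_le_ncard_edgeSet (x := x) (y := y) (by grind) (by grind) hxy hPxy
    have hsdiff := Set.ncard_sdiff_add_ncard_of_subset (edgeSet_mono hPF)
    calc (F ∆ (P ∆ edge x y)).edgeSet.ncard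
        ≤ ((F \ P) ⊔ edge x y).edgeSet.ncard := Set.ncard_le_ncard (edgeSet_mono hle)
      _ ≤ (F.edgeSet \ P.edgeSet).ncard + 1 := by
        rw [edgeSet_sup, edgeSet_sdiff, edgeSet_edge_of_ne hxy, Set.union_singleton]
        exact Set.ncard_insert_le _ _
      _ < F.edgeSet.ncard := by omega

theorem IsTJoin_s13.exists_isSemiperfectForest [Finite V] (hF : IsTJoin_s13 F T) (hFG : F ≤ G) :
    ∃ H, IsSemiperfectForest G H ∧ IsTJoin_s13 H T ∧
      ∀ x y, H.Reachable x y → F.Reachable x y := by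
  obtain ⟨H, ⟨hHG, hH, hHF⟩, hmin⟩ := (Set.toFinite {H | H ≤ G ∧ IsTJoin_s13 H T ∧
    ∀ x y, H.Reachable x y → F.Reachable x y}).exists_minimalFor (fun H => H.edgeSet.ncard) _
      ⟨F, hFG, hF, fun _ _ => id⟩
  refine ⟨H, isSemiperfectForest_of_forall_adj_isBridge hHG fun x y hxy => ?_, hH, hHF⟩
  by_contra hbridge
  obtain ⟨H', hH'le, hH', hlt⟩ := hH.exists_ncard_edgeSet_lt hxy.ne hbridge
  have hreach : H.Reachable x y :=
    (not_not.1 (isBridge_iff.not.1 hbridge)).mono (deleteEdges_le _)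
  have hH'G : H' ≤ G := hH'le.trans (sup_le hHG ((edge_le_iff _).2 (.inr hxy)))
  exact hlt.not_ge (hmin ⟨hH'G, hH', fun a b hab =>
    hHF a b (reachable_of_reachable_sup_edge hreach (hab.mono hH'le))⟩ hlt.le)

theorem IsSemiperfectForest.four_le_ncard [Finite V] (hforest : IsSemiperfectForest G F)
    (hF : IsTJoin_s13 F T) (hu : u ∈ T) (hv : v ∈ T) (huv : G.Adj u v) (hnot : ¬ F.Adj u v) :
    4 ≤ T.ncard := by
  let C : Set V := {w | F.Reachable u w}
  have hvC : v ∉ C := fun hreach => hnot (hforest.2.2 u v hreach huv)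
  have heven : Even (T ∩ C).ncard :=
    hF.even_ncard_inter fun _ _ hab ha => Reachable.trans ha hab.reachable
  have heven' : Even (T \ C).ncard :=
    hF.even_ncard_inter fun _ _ hab ha hb => ha (Reachable.trans hb hab.symm.reachable)
  have hpos : 0 < (T ∩ C).ncard := (Set.ncard_pos).2 ⟨u, hu, Reachable.refl u⟩
  have hpos' : 0 < (T \ C).ncard := (Set.ncard_pos).2 ⟨v, hv, hvC⟩
  have hsum := Set.ncard_inter_add_ncard_sdiff_eq_ncard T C
  grind

theorem exists_isTJoin_le_spanningCoe_induce [Finite V] {S : Set V}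
    (hS : (G.induce S).Preconnected) (hTS : T ⊆ S) (hT : Even T.ncard) :
    ∃ F ≤ (G.induce S).spanningCoe, IsTJoin_s13 F T :=
  exists_isTJoin_of_even_ncard hT fun x hx y hy =>
    (hS ⟨x, hTS hx⟩ ⟨y, hTS hy⟩).map (Embedding.spanningCoe _).toHom

theorem IsConnectedBipartition.exists_isTJoin_not_reachable [Finite V] {A : Set V}
    (hA : IsConnectedBipartition G u v A) (hTA : Even (T ∩ A).ncard) (hT : Even T.ncard) :
    ∃ F ≤ G, IsTJoin_s13 F T ∧ ¬ F.Reachable u v := by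
  have hTA' : Even (T ∩ Aᶜ).ncard := by
    have := Set.ncard_inter_add_ncard_sdiff_eq_ncard T A
    rw [← Set.sdiff_eq]
    grind
  obtain ⟨F₁, hF₁A, hF₁⟩ := exists_isTJoin_le_spanningCoe_induce hA.connected.preconnected
    Set.inter_subset_right hTA
  obtain ⟨F₂, hF₂A, hF₂⟩ := exists_isTJoin_le_spanningCoe_induce hA.connected_compl.preconnected
    Set.inter_subset_right hTA'
  refine ⟨F₁ ∆ F₂, symmDiff_le_sup.trans (sup_le (hF₁A.trans (spanningCoe_induce_le _ _))
    (hF₂A.trans (spanningCoe_induce_le _ _))), ?_, fun hreach => hA.notMem ?_⟩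
  · convert hF₁.symmDiff_s13 hF₂ using 1
    grind
  · refine mem_of_reachable_of_forall_adj_mem (fun a b hab ha => ?_) hreach hA.mem
    rcases (symmDiff_le_sup : F₁ ∆ F₂ ≤ F₁ ⊔ F₂) hab with hab | hab
    · exact Subgraph.mem_of_adj_spanningCoe _ (hF₁A hab.symm)
    · exact absurd ha (Subgraph.mem_of_adj_spanningCoe _ (hF₂A hab))

theorem exists_isSemiperfectForest_isTJoin_not_adj [Finite V]
    (hG : ∀ x, (G.induce {x}ᶜ).Connected) (huv : u ≠ v) (hT : Even T.ncard)
    (hT4 : 4 ≤ T.ncard) : ∃ F, IsSemiperfectForest G F ∧ IsTJoin_s13 F T ∧ ¬ F.Adj u v := by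
  have hTv : 2 ≤ (T \ {v}).ncard := by
    have := Set.pred_ncard_le_ncard_sdiff_singleton T v
    omega
  have huT : (T ∩ {u}).ncard ≤ 2 := (Set.ncard_le_ncard Set.inter_subset_right).trans (by simp)
  obtain ⟨A, hA, hTA⟩ := IsConnectedBipartition.exists_ncard_inter_eq hG huv huT hTv
  obtain ⟨F₀, hF₀G, hF₀, hnot⟩ := hA.exists_isTJoin_not_reachable (hTA ▸ even_two) hT
  obtain ⟨F, hforest, hF, hreach⟩ := hF₀.exists_isSemiperfectForest hF₀G
  exact ⟨F, hforest, hF, fun hadj => hnot (hreach u v hadj.reachable)⟩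

end SemiperfectForest

theorem forall_fdeg_mod_two_eq_iff_isTJoin {V : Type*} {F : SimpleGraph V} {f : V → ℕ}
    (hf : ∀ w, f w ≤ 1) : (∀ w, fdeg F w % 2 = f w) ↔ IsTJoin_s13 F {w | f w = 1} :=
  forall_congr' fun w => by
    have := hf w
    rw [Nat.odd_iff, Set.mem_ofPred]
    omega

theorem sum_eq_ncard_setOf_eq_one {ι : Type*} [Fintype ι] {f : ι → ℕ} (hf : ∀ i, f i ≤ 1) :
    ∑ i, f i = {i | f i = 1}.ncard := by
  rw [Set.ncard_eq_toFinset_card', Set.toFinset_ofPred, Finset.card_filter]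
  refine Finset.sum_congr rfl fun i _ => ?_
  have := hf i
  split_ifs <;> omega

/-- Let `G` be a 2-connected graph (at least 3 vertices, connected, and connected after
deleting any single vertex), let `e = uv ∈ E(G)`, and let `f : V → {0,1}` be even-sum
with `f(u) = f(v) = 1`. Then `G` has an `f`-parity perfect forest not containing `e`
if and only if `∑_z f(z) ≥ 4`. -/
theorem parity_forest_avoiding_edge_iff_sum_ge_four {V : Type*} [Fintype V]
    (G : SimpleGraph V) (h3 : 3 ≤ Fintype.card V) (hconn : G.Connected)
    (h2 : ∀ x : V, (G.induce (({x} : Set V)ᶜ)).Connected)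
    (u v : V) (huv : G.Adj u v)
    (f : V → ℕ) (hf01 : ∀ w, f w ≤ 1) (hfsum : Even (∑ w, f w))
    (hfu : f u = 1) (hfv : f v = 1) :
    (∃ F : SimpleGraph V, IsSemiperfectForest G F ∧
        (∀ w : V, fdeg F w % 2 = f w) ∧ ¬ F.Adj u v) ↔ 4 ≤ ∑ w, f w := by
  rw [sum_eq_ncard_setOf_eq_one hf01] at hfsum ⊢
  simp only [forall_fdeg_mod_two_eq_iff_isTJoin hf01]
  constructor
  · rintro ⟨F, hforest, hF, hnot⟩
    exact hforest.four_le_ncard hF hfu hfv huv hnot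
  · exact exists_isSemiperfectForest_isTJoin_not_adj h2 huv.ne hfsum
end

section
/- Let G be a graph and let e₁ = u₁v₁ and e₂ = u₂v₂ be distinct edges of G. Let H be the graph obtained from G by deleting the edge e₁ and then, for each vertex w ∈ V(G) \ {u₁, v₁}, adding a new vertex w' together with the pendant edge ww'. Then H has a 0-perfect forest containing the edge e₂ if and only if G has an induced cycle containing both e₁ and e₂. -/
open SimpleGraph

/-- The graph `H` obtained from `G` by deleting the edge `u₁v₁` and adding, for each
vertex `w ∉ {u₁, v₁}`, a new pendant vertex `w'` joined to `w` by an edge. -/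
def pendantGraph {V : Type*} (G : SimpleGraph V) (u₁ v₁ : V) :
    SimpleGraph (V ⊕ {w : V // w ≠ u₁ ∧ w ≠ v₁}) :=
  SimpleGraph.fromEdgeSet
    ({e : Sym2 (V ⊕ {w : V // w ≠ u₁ ∧ w ≠ v₁}) |
        ∃ a b : V, G.Adj a b ∧ s(a, b) ≠ s(u₁, v₁) ∧ e = s(Sum.inl a, Sum.inl b)} ∪
     {e : Sym2 (V ⊕ {w : V // w ≠ u₁ ∧ w ≠ v₁}) |
        ∃ w : {w : V // w ≠ u₁ ∧ w ≠ v₁}, e = s(Sum.inl (w : V), Sum.inr w)})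

/-!
In a 0-perfect forest of `H` every new vertex `w'` is a leaf attached to `w`. Deleting the new
vertices yields a semiperfect forest of `G - e₁` whose vertices of odd degree are exactly `u₁` and
`v₁`, and every such forest arises in this way. A longest path through `e₂` in this forest joins two
leaves, hence joins `u₁` to `v₁`; as the components are induced it is chordless in `G - e₁`, and
`e₁` closes it to an induced cycle of `G`. Conversely, removing `e₁` from an induced cycle leaves a
chordless path, which together with isolated vertices is such a forest of `G - e₁`.
-/

section Forests

variable {V : Type*} {G T : SimpleGraph V} {a b : V}

lemma isChordless_of_isAcyclic (hT : T.IsAcyclic) (p : T.Walk a b) : p.IsChordless := by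
  classical
  rw [Walk.isChordless_iff_forall_mem_edges]
  intro x y hx hy hxy
  have hbridge := isAcyclic_iff_forall_adj_isBridge.mp hT hxy
  have hmem := isBridge_iff_forall_walk_mem_edges.mp hbridge
    ((p.takeUntil x hx).reverse.append (p.takeUntil y hy))
  rw [Walk.edges_append, List.mem_append, Walk.edges_reverse, List.mem_reverse] at hmem
  exact hmem.elim (p.edges_takeUntil_subset_edges hx ·) (p.edges_takeUntil_subset_edges hy ·)

lemma IsSemiperfectForest.isChordless_mapLe (hT : IsSemiperfectForest G T) (p : T.Walk a b) :
    (p.mapLe hT.1).IsChordless := by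
  classical
  obtain ⟨hle, hacyc, hinduced⟩ := hT
  rw [Walk.isChordless_iff_forall_mem_edges, Walk.support_mapLe_eq_support,
    Walk.edges_mapLe_eq_edges]
  intro x y hx hy hxy
  have hreach : T.Reachable x y :=
    (p.takeUntil x hx).reachable.symm.trans (p.takeUntil y hy).reachable
  exact (isChordless_of_isAcyclic hacyc p).mem_edges hx hy (hinduced x y hreach hxy)

lemma fdeg_end_eq_one_of_isAcyclic (hT : T.IsAcyclic) {p : T.Walk a b} (hp : p.IsPath)
    (hnil : ¬ p.Nil) (hmax : ∀ z, T.Adj b z → z ∈ p.support) : fdeg T b = 1 := by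
  rw [fdeg, Set.ncard_eq_one]
  refine ⟨p.penultimate, Set.ext fun z => ⟨fun hz => ?_, ?_⟩⟩
  · exact hT.eq_penultimate_of_adj_end hp hz (hmax z hz)
  · rintro rfl
    exact (p.adj_penultimate hnil).symm

lemma not_nil_of_mem_edges {p : G.Walk a b} {e : Sym2 V} (he : e ∈ p.edges) : ¬ p.Nil :=
  fun hnil => List.ne_nil_of_mem he (Walk.edges_eq_nil.mpr hnil)

lemma exists_longest_isPath_mem_edges [Finite V] {e : Sym2 V} (he : e ∈ G.edgeSet) :
    ∃ (a b : V) (p : G.Walk a b), p.IsPath ∧ e ∈ p.edges ∧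
      ∀ (c d : V) (q : G.Walk c d), q.IsPath → e ∈ q.edges → q.length ≤ p.length := by
  have := Fintype.ofFinite V
  let lengths : Set ℕ :=
    {n | ∃ (a b : V) (p : G.Walk a b), p.IsPath ∧ e ∈ p.edges ∧ p.length = n}
  have hfin : lengths.Finite := (Set.finite_lt_nat (Fintype.card V)).subset <| by
    rintro _ ⟨a, b, p, hp, -, rfl⟩
    exact hp.length_lt
  have hne : lengths.Nonempty := by
    induction e with | h u v
    have huv : G.Adj u v := he
    exact ⟨_, u, v, huv.toWalk, .of_adj huv, by simp, rfl⟩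
  obtain ⟨_, ⟨a, b, p, hp, hep, rfl⟩, hmax⟩ := hfin.exists_maximal hne
  exact ⟨a, b, p, hp, hep, fun c d q hq heq =>
    (le_total q.length p.length).elim id (hmax ⟨c, d, q, hq, heq, rfl⟩)⟩

lemma exists_isPath_mem_edges_fdeg_ends_eq_one [Finite V] (hT : T.IsAcyclic) {e : Sym2 V}
    (he : e ∈ T.edgeSet) :
    ∃ (a b : V) (p : T.Walk a b), p.IsPath ∧ e ∈ p.edges ∧ fdeg T a = 1 ∧ fdeg T b = 1 := by
  obtain ⟨a, b, p, hp, hep, hmax⟩ := exists_longest_isPath_mem_edges he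
  have hend {c d : V} {q : T.Walk c d} (hq : q.IsPath) (heq : e ∈ q.edges)
      (hlen : q.length = p.length) : fdeg T d = 1 := by
    refine fdeg_end_eq_one_of_isAcyclic hT hq (not_nil_of_mem_edges heq) fun z hz => ?_
    by_contra hzq
    have hlonger := hmax c z (q.concat hz) (hq.concat hzq hz) (by simp [Walk.edges_concat, heq])
    rw [Walk.length_concat] at hlonger
    omega
  exact ⟨a, b, p, hp, hep, hend hp.reverse (by simpa using hep) p.length_reverse, hend hp hep rfl⟩

lemma isSemiperfectForest_spanningCoe {S : G.Subgraph} (hinduced : S.IsInduced)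
    (hacyc : S.spanningCoe.IsAcyclic) : IsSemiperfectForest G S.spanningCoe := by
  refine ⟨S.spanningCoe_le, hacyc, fun x y hreach hxy => ?_⟩
  have hmem {x y : V} (hreach : S.spanningCoe.Reachable x y) (hne : x ≠ y) : x ∈ S.verts := by
    obtain ⟨p⟩ := hreach
    exact S.edge_vert (p.adj_snd (Walk.not_nil_of_ne hne))
  exact hinduced (hmem hreach hxy.ne) (hmem hreach.symm hxy.ne.symm) hxy

lemma isAcyclic_spanningCoe_toSubgraph {p : G.Walk a b} (hp : p.IsPath) :
    p.toSubgraph.spanningCoe.IsAcyclic := by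
  induction p with
  | nil => exact isAcyclic_bot.anti fun _ _ => id
  | @cons u v w h q ih =>
    obtain ⟨hq, huq⟩ := (Walk.cons_isPath_iff h q).mp hp
    have hnreach : ¬ q.toSubgraph.spanningCoe.Reachable u v := by
      rintro ⟨r⟩
      have hadj := r.adj_snd (Walk.not_nil_of_ne h.ne)
      exact huq (q.mem_verts_toSubgraph.mp (q.toSubgraph.edge_vert hadj))
    rw [Walk.toSubgraph, Subgraph.sup_spanningCoe, Subgraph.spanningCoe_subgraphOfAdj, sup_comm]
    exact (ih hq).sup_edge_of_not_reachable hnreach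

lemma odd_fdeg_spanningCoe_toSubgraph_iff {p : G.Walk a b} (hp : p.IsPath) (hnil : ¬ p.Nil)
    (x : V) : Odd (fdeg p.toSubgraph.spanningCoe x) ↔ x = a ∨ x = b := by
  change Odd (p.toSubgraph.neighborSet x).ncard ↔ _
  by_cases hxa : x = a
  · simp [hxa, hp.neighborSet_toSubgraph_startpoint hnil]
  by_cases hxb : x = b
  · simp [hxb, hp.neighborSet_toSubgraph_endpoint hnil]
  suffices Even (p.toSubgraph.neighborSet x).ncard by simpa [hxa, hxb]
  by_cases hx : x ∈ p.support
  · obtain ⟨i, rfl, hi⟩ := Walk.mem_support_iff_exists_getVert.mp hx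
    have hi0 : i ≠ 0 := fun h => hxa (by simp [h])
    have hilen : i ≠ p.length := fun h => hxb (by simp [h])
    simp [hp.ncard_neighborSet_toSubgraph_internal_eq_two hi0 (by omega)]
  · have hempty : p.toSubgraph.neighborSet x = ∅ :=
      Set.eq_empty_of_forall_notMem fun y hy =>
        hx (p.mem_verts_toSubgraph.mp (p.toSubgraph.edge_vert hy))
    simp [hempty]

theorem exists_isSemiperfectForest_odd_iff_exists_isChordless_isPath [Finite V] {u v : V} :
    (∃ T : SimpleGraph V, IsSemiperfectForest G T ∧ (∀ x, Odd (fdeg T x) ↔ x = a ∨ x = b) ∧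
      T.Adj u v) ↔
    ∃ p : G.Walk a b, p.IsPath ∧ p.IsChordless ∧ s(u, v) ∈ p.edges := by
  constructor
  · rintro ⟨T, hT, hodd, huv⟩
    obtain ⟨c, d, p, hp, hep, hc, hd⟩ := exists_isPath_mem_edges_fdeg_ends_eq_one hT.2.1
      (T.mem_edgeSet.mpr huv)
    have hcd : c ≠ d := fun h => not_nil_of_mem_edges hep (hp.nil_iff_eq.mpr h)
    have hends : (c = a ∧ d = b) ∨ (c = b ∧ d = a) := by
      have hc_end := (hodd c).mp (hc ▸ odd_one)
      have hd_end := (hodd d).mp (hd ▸ odd_one)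
      grind
    obtain ⟨q, hq, heq⟩ : ∃ q : T.Walk a b, q.IsPath ∧ s(u, v) ∈ q.edges := by
      rcases hends with ⟨rfl, rfl⟩ | ⟨rfl, rfl⟩
      · exact ⟨p, hp, hep⟩
      · exact ⟨p.reverse, hp.reverse, by simpa using hep⟩
    exact ⟨q.mapLe hT.1, hq.mapLe hT.1, hT.isChordless_mapLe q,
      by rwa [Walk.edges_mapLe_eq_edges]⟩
  · rintro ⟨p, hp, hchordless, hep⟩
    exact ⟨p.toSubgraph.spanningCoe,
      isSemiperfectForest_spanningCoe (Walk.isInduced_toSubgraph.mpr hchordless)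
        (isAcyclic_spanningCoe_toSubgraph hp),
      odd_fdeg_spanningCoe_toSubgraph_iff hp (not_nil_of_mem_edges hep),
      Walk.adj_toSubgraph_iff_mem_edges.mpr hep⟩

end Forests

section InducedCycles

variable {V : Type*} {G : SimpleGraph V} {a b : V}

lemma exists_isCycle_cons_toSubgraph_eq {x : V} {c : G.Walk x x} (hc : c.IsCycle)
    (hab : G.Adj a b) (he : s(a, b) ∈ c.edges) :
    ∃ p : G.Walk b a, (Walk.cons hab p).IsCycle ∧ (Walk.cons hab p).toSubgraph = c.toSubgraph := by
  classical
  have ha := c.fst_mem_support_of_mem_edges he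
  obtain ⟨d, hd, hdc, rfl⟩ :
      ∃ d : G.Walk a a, d.IsCycle ∧ d.toSubgraph = c.toSubgraph ∧ d.snd = b := by
    have hrotate := c.toSubgraph_rotate ha
    have hb : b ∈ (c.rotate a ha).toSubgraph.neighborSet a := by
      rw [hrotate]
      exact Walk.adj_toSubgraph_iff_mem_edges.mpr he
    rw [(hc.rotate ha).neighborSet_toSubgraph_endpoint] at hb
    rcases hb with rfl | rfl
    · exact ⟨c.rotate a ha, hc.rotate ha, hrotate, rfl⟩
    · exact ⟨(c.rotate a ha).reverse, (hc.rotate ha).reverse,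
        (Walk.toSubgraph_reverse _).trans hrotate, Walk.snd_reverse _⟩
  have hcons := d.cons_tail_eq hd.not_nil
  exact ⟨d.tail, hcons.symm ▸ hd, hcons.symm ▸ hdc⟩

lemma isCycle_cons_mapLe_deleteEdges_iff (hab : G.Adj a b)
    (p : (G.deleteEdges {s(a, b)}).Walk b a) :
    (Walk.cons hab (p.mapLe (deleteEdges_le _))).IsCycle ↔ p.IsPath := by
  have he : s(a, b) ∉ p.edges := fun h => by simpa using p.adj_of_mem_edges h
  rw [Walk.cons_isCycle_iff, Walk.edges_mapLe_eq_edges, Walk.isPath_mapLe]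
  exact and_iff_left he

lemma isChordless_cons_mapLe_deleteEdges_iff (hab : G.Adj a b)
    (p : (G.deleteEdges {s(a, b)}).Walk b a) :
    (Walk.cons hab (p.mapLe (deleteEdges_le _))).IsChordless ↔ p.IsChordless := by
  have hsupport (x : V) : x = a ∨ x ∈ p.support ↔ x ∈ p.support :=
    or_iff_right_of_imp fun h => h ▸ p.end_mem_support
  simp only [Walk.isChordless_iff_forall_mem_edges, Walk.support_cons, Walk.edges_cons,
    List.mem_cons, Walk.support_mapLe_eq_support, Walk.edges_mapLe_eq_edges, hsupport,
    deleteEdges_adj, Set.mem_singleton_iff, and_imp, or_iff_not_imp_left]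

theorem exists_isChordless_isCycle_iff_exists_isChordless_isPath_deleteEdges (hab : G.Adj a b)
    {e : Sym2 V} (hne : e ≠ s(a, b)) :
    (∃ (x : V) (c : G.Walk x x), c.IsCycle ∧ c.IsChordless ∧ s(a, b) ∈ c.edges ∧ e ∈ c.edges) ↔
    ∃ p : (G.deleteEdges {s(a, b)}).Walk b a, p.IsPath ∧ p.IsChordless ∧ e ∈ p.edges := by
  constructor
  · rintro ⟨x, c, hc, hchordless, hab_mem, he⟩
    obtain ⟨q, hq, hqc⟩ := exists_isCycle_cons_toSubgraph_eq hc hab hab_mem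
    have hab_notMem := ((Walk.cons_isCycle_iff q hab).mp hq).2
    obtain ⟨p, rfl⟩ : ∃ p : (G.deleteEdges {s(a, b)}).Walk b a,
        p.mapLe (deleteEdges_le _) = q :=
      ⟨_, q.map_toDeleteEdges_eq _ fun _ h => ne_of_mem_of_not_mem h hab_notMem⟩
    rw [← Walk.isInduced_toSubgraph, ← hqc, Walk.isInduced_toSubgraph,
      isChordless_cons_mapLe_deleteEdges_iff] at hchordless
    rw [← Walk.mem_edges_toSubgraph, ← hqc, Walk.mem_edges_toSubgraph, Walk.edges_cons,
      Walk.edges_mapLe_eq_edges] at he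
    exact ⟨p, (isCycle_cons_mapLe_deleteEdges_iff hab p).mp hq, hchordless,
      List.mem_of_ne_of_mem hne he⟩
  · rintro ⟨p, hp, hchordless, he⟩
    refine ⟨a, Walk.cons hab (p.mapLe (deleteEdges_le _)),
      (isCycle_cons_mapLe_deleteEdges_iff hab p).mpr hp,
      (isChordless_cons_mapLe_deleteEdges_iff hab p).mpr hchordless, ?_, ?_⟩
    · exact List.mem_cons_self
    · rw [Walk.edges_cons, Walk.edges_mapLe_eq_edges]
      exact List.mem_cons_of_mem _ he

end InducedCycles

section Pendants

variable {V : Type*} {K T : SimpleGraph V} {P : V → Prop}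

/-- The graph obtained from `K` by attaching one pendant vertex to each vertex satisfying `P`;
the pendant vertex at `w` is `Sum.inr w`. It separates the two steps in the construction of
`pendantGraph`, the deletion of an edge and the attachment of the pendant vertices. -/
def addPendants (K : SimpleGraph V) (P : V → Prop) : SimpleGraph (V ⊕ {w : V // P w}) where
  Adj
    | Sum.inl x, Sum.inl y => K.Adj x y
    | Sum.inl x, Sum.inr w => x = w
    | Sum.inr w, Sum.inl x => x = w
    | Sum.inr _, Sum.inr _ => False
  symm := ⟨by
    rintro (x | x) (y | y) h
    exacts [K.adj_symm h, h, h, h]⟩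
  loopless := ⟨by
    rintro (x | x) h
    exacts [K.loopless.irrefl x h, h]⟩

@[simp]
lemma addPendants_adj_inl_inl {x y : V} :
    (addPendants K P).Adj (Sum.inl x) (Sum.inl y) ↔ K.Adj x y := Iff.rfl

@[simp]
lemma addPendants_adj_inl_inr {x : V} {w : {w : V // P w}} :
    (addPendants K P).Adj (Sum.inl x) (Sum.inr w) ↔ x = w := Iff.rfl

@[simp]
lemma addPendants_adj_inr_inl {x : V} {w : {w : V // P w}} :
    (addPendants K P).Adj (Sum.inr w) (Sum.inl x) ↔ x = w := Iff.rfl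

@[simp]
lemma not_addPendants_adj_inr_inr {w w' : {w : V // P w}} :
    ¬ (addPendants K P).Adj (Sum.inr w) (Sum.inr w') := id

lemma pendantGraph_eq_addPendants (G : SimpleGraph V) (u v : V) :
    pendantGraph G u v =
      addPendants (G.deleteEdges {s(u, v)}) (fun w => w ≠ u ∧ w ≠ v) := by
  ext (x | w) (y | w') <;>
    simp only [pendantGraph, fromEdgeSet_adj, Set.mem_union, Set.mem_ofPred_eq, Sym2.eq_iff,
      addPendants_adj_inl_inl, addPendants_adj_inl_inr, addPendants_adj_inr_inl,
      not_addPendants_adj_inr_inr, deleteEdges_adj, Set.mem_singleton_iff] <;>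
    grind [G.adj_comm, G.ne_of_adj]

lemma addPendants_le_addPendants_iff : addPendants T P ≤ addPendants K P ↔ T ≤ K := by
  refine ⟨fun h x y hxy => @h (Sum.inl x) (Sum.inl y) hxy, fun h => ?_⟩
  rintro (x | w) (y | w') hxy
  exacts [h hxy, hxy, hxy, hxy]

lemma reachable_addPendants_inl_inl_iff {x y : V} :
    (addPendants T P).Reachable (Sum.inl x) (Sum.inl y) ↔ T.Reachable x y := by
  refine ⟨?_, fun h => h.map (⟨Sum.inl, id⟩ : T →g addPendants T P)⟩
  let base : V ⊕ {w : V // P w} → V := Sum.elim id Subtype.val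
  suffices ∀ s t, (addPendants T P).Reachable s t → T.Reachable (base s) (base t) from this _ _
  rintro s t ⟨p⟩
  induction p with
  | nil => rfl
  | @cons s t _ h _ ih =>
    refine Reachable.trans ?_ ih
    rcases s with x | w <;> rcases t with y | w'
    · exact Adj.reachable h
    · exact (show x = w' from h) ▸ .rfl
    · exact (show y = w from h) ▸ .rfl
    · exact h.elim

lemma deleteEdges_addPendants_inl_inl (x y : V) :
    (addPendants T P).deleteEdges {s(Sum.inl x, Sum.inl y)} =
      addPendants (T.deleteEdges {s(x, y)}) P := by
  ext (s | s) (t | t) <;> simp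

lemma isBridge_addPendants_inl_inr (w : {w : V // P w}) :
    (addPendants T P).IsBridge s(Sum.inl w.1, Sum.inr w) := by
  rw [isBridge_iff]
  rintro ⟨p⟩
  have hadj := p.adj_penultimate (Walk.not_nil_of_ne Sum.inl_ne_inr)
  cases hpen : p.penultimate <;> simp_all

lemma isAcyclic_addPendants_iff : (addPendants T P).IsAcyclic ↔ T.IsAcyclic := by
  refine ⟨fun h => h.of_comap ⟨Sum.inl, Sum.inl_injective⟩, fun hT => ?_⟩
  rw [isAcyclic_iff_forall_adj_isBridge] at hT ⊢
  rintro (x | w) (y | w') h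
  · rw [isBridge_iff, deleteEdges_addPendants_inl_inl, reachable_addPendants_inl_inl_iff]
    exact isBridge_iff.mp (hT h)
  · obtain rfl := addPendants_adj_inl_inr.mp h
    exact isBridge_addPendants_inl_inr w'
  · obtain rfl := addPendants_adj_inr_inl.mp h
    exact Sym2.eq_swap ▸ isBridge_addPendants_inl_inr w
  · exact h.elim

lemma isSemiperfectForest_addPendants_iff :
    IsSemiperfectForest (addPendants K P) (addPendants T P) ↔ IsSemiperfectForest K T := by
  simp only [IsSemiperfectForest, addPendants_le_addPendants_iff, isAcyclic_addPendants_iff,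
    Sum.forall, reachable_addPendants_inl_inl_iff, addPendants_adj_inl_inl,
    addPendants_adj_inl_inr, addPendants_adj_inr_inl, not_addPendants_adj_inr_inr, imp_self,
    implies_true, and_true]

lemma eq_addPendants_comap_inl {F : SimpleGraph (V ⊕ {w : V // P w})}
    (hle : F ≤ addPendants K P) (hdeg : ∀ w, fdeg F (Sum.inr w) ≠ 0) :
    F = addPendants (F.comap Sum.inl) P := by
  have hpendant (w : {w : V // P w}) : F.Adj (Sum.inl w.1) (Sum.inr w) := by
    obtain ⟨x | w', h⟩ := Set.nonempty_of_ncard_ne_zero (hdeg w)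
    · exact addPendants_adj_inr_inl.mp (hle h) ▸ F.adj_symm h
    · exact (hle h).elim
  ext (x | w) (y | w')
  · rfl
  · exact ⟨fun h => hle h, by rintro rfl; exact hpendant w'⟩
  · exact ⟨fun h => hle h, by rintro rfl; exact (hpendant w).symm⟩
  · exact ⟨fun h => hle h, False.elim⟩

lemma fdeg_addPendants_inr (w : {w : V // P w}) : fdeg (addPendants T P) (Sum.inr w) = 1 := by
  rw [fdeg, Set.ncard_eq_one]
  exact ⟨Sum.inl w.1, by ext (x | w') <;> simp⟩

lemma fdeg_addPendants_inl_of_not {x : V} (hx : ¬ P x) :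
    fdeg (addPendants T P) (Sum.inl x) = fdeg T x := by
  have hnbr : (addPendants T P).neighborSet (Sum.inl x) = Sum.inl '' T.neighborSet x := by
    ext (y | w)
    · simp
    · simpa using fun h : x = w => hx (h ▸ w.2)
  rw [fdeg, hnbr, Set.ncard_image_of_injective _ Sum.inl_injective, fdeg]

lemma fdeg_addPendants_inl_eq_add_one {x : V} (hx : P x) (hfin : (T.neighborSet x).Finite) :
    fdeg (addPendants T P) (Sum.inl x) = fdeg T x + 1 := by
  have hnbr : (addPendants T P).neighborSet (Sum.inl x) =
      insert (Sum.inr ⟨x, hx⟩) (Sum.inl '' T.neighborSet x) := by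
    ext (y | w)
    · simp
    · simp [Subtype.ext_iff, eq_comm]
  rw [fdeg, hnbr, Set.ncard_insert_of_notMem (by simp) (hfin.image _),
    Set.ncard_image_of_injective _ Sum.inl_injective, fdeg]

lemma forall_odd_fdeg_addPendants_iff [Finite V] :
    (∀ s, Odd (fdeg (addPendants T P) s)) ↔ ∀ x, (Odd (fdeg T x) ↔ ¬ P x) := by
  simp only [Sum.forall, fdeg_addPendants_inr, odd_one, implies_true, and_true]
  refine forall_congr' fun x => ?_
  by_cases hx : P x
  · simp [fdeg_addPendants_inl_eq_add_one hx (Set.toFinite _), hx, Nat.odd_add_one]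
  · simp [fdeg_addPendants_inl_of_not hx, hx]

theorem exists_isSemiperfectForest_addPendants_odd_iff [Finite V] {u v : V} :
    (∃ F, IsSemiperfectForest (addPendants K P) F ∧ (∀ s, Odd (fdeg F s)) ∧
      F.Adj (Sum.inl u) (Sum.inl v)) ↔
    ∃ T, IsSemiperfectForest K T ∧ (∀ x, Odd (fdeg T x) ↔ ¬ P x) ∧ T.Adj u v := by
  constructor
  · rintro ⟨F, hF, hodd, huv⟩
    have hFT := eq_addPendants_comap_inl hF.1 fun w => (hodd _).pos.ne'
    rw [hFT] at hF hodd
    exact ⟨F.comap Sum.inl, isSemiperfectForest_addPendants_iff.mp hF,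
      forall_odd_fdeg_addPendants_iff.mp hodd, huv⟩
  · rintro ⟨T, hT, hodd, huv⟩
    exact ⟨addPendants T P, isSemiperfectForest_addPendants_iff.mpr hT,
      forall_odd_fdeg_addPendants_iff.mpr hodd, huv⟩

end Pendants

/-- Let `e₁ = u₁v₁` and `e₂ = u₂v₂` be distinct edges of `G`, and let `H` be obtained
from `G` by deleting `e₁` and adding a pendant edge at every vertex other than `u₁, v₁`.
Then `H` has a 0-perfect forest containing `e₂` if and only if `G` has an induced cycle
containing both `e₁` and `e₂`. -/
theorem zero_perfect_forest_containing_edge_iff_induced_cycle {V : Type*} [Fintype V]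
    (G : SimpleGraph V) (u₁ v₁ u₂ v₂ : V)
    (he₁ : G.Adj u₁ v₁) (he₂ : G.Adj u₂ v₂) (hne : s(u₁, v₁) ≠ s(u₂, v₂)) :
    (∃ F : SimpleGraph (V ⊕ {w : V // w ≠ u₁ ∧ w ≠ v₁}),
        IsSemiperfectForest (pendantGraph G u₁ v₁) F ∧
        (∀ w, Odd (fdeg F w)) ∧ F.Adj (Sum.inl u₂) (Sum.inl v₂)) ↔
    (∃ (a : V) (c : G.Walk a a), c.IsCycle ∧
        (∀ x y : V, x ∈ c.support → y ∈ c.support → G.Adj x y → s(x, y) ∈ c.edges) ∧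
        s(u₁, v₁) ∈ c.edges ∧ s(u₂, v₂) ∈ c.edges) := by
  have hends (x : V) : ¬ (x ≠ u₁ ∧ x ≠ v₁) ↔ x = v₁ ∨ x = u₁ := by tauto
  simp only [pendantGraph_eq_addPendants, exists_isSemiperfectForest_addPendants_odd_iff, hends,
    exists_isSemiperfectForest_odd_iff_exists_isChordless_isPath]
  rw [← exists_isChordless_isCycle_iff_exists_isChordless_isPath_deleteEdges he₁ hne.symm]
  simp only [Walk.isChordless_iff_forall_mem_edges]
end

section
/- Let G be a connected graph, let u ∈ V(G), and let G' be the graph obtained from G by adding two new vertices x and y together with the edges xy and yu. Then, for any integer k ≥ 0, G has a 0-perfect forest with |V(G)| − k edges if and only if G' has a 0-perfect forest with |V(G')| − (k+1) edges. -/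
open SimpleGraph

/-- The graph `G'` obtained from `G` by adding two new vertices `x = Sum.inr 0` and
`y = Sum.inr 1` together with the edges `xy` and `yu`. -/
def addTwoVerts {V : Type*} (G : SimpleGraph V) (u : V) : SimpleGraph (V ⊕ Fin 2) :=
  SimpleGraph.fromEdgeSet
    ({e : Sym2 (V ⊕ Fin 2) | ∃ a b : V, G.Adj a b ∧ e = s(Sum.inl a, Sum.inl b)} ∪
     {s(Sum.inr 0, Sum.inr 1), s(Sum.inr 1, Sum.inl u)})

/-!
In a 0-perfect forest of `G'` the vertex `x` has degree 1, because `y` is its only neighbour in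
`G'`; so `xy` is an edge of the forest. As `y` has odd degree and only one further neighbour `u`,
the edge `yu` is not in the forest. Hence the 0-perfect forests of `G'` are exactly the disjoint
unions of a 0-perfect forest of `G` with the single edge `xy`.
-/

section Sum

variable {V W : Type*} {G : SimpleGraph V} {H : SimpleGraph W}

lemma reachable_sum_inl_iff {a b : V} :
    (G ⊕g H).Reachable (.inl a) (.inl b) ↔ G.Reachable a b := by
  refine ⟨fun h ↦ ?_, fun h ↦ h.map Embedding.sumInl.toHom⟩
  rw [reachable_iff_reflTransGen] at h ⊢
  -- Collapsing `W` to the vertex `a` sends every edge to an edge of `G` or to a constant walk.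
  refine h.lift' (Sum.elim id fun _ ↦ a) ?_
  rintro (v | w) (v' | w') hadj
  · exact .single (sum_adj_inl.1 hadj)
  · exact absurd hadj (not_adj_sum_inl_inr v w')
  · exact absurd hadj.symm (not_adj_sum_inl_inr v' w)
  · exact .refl

lemma reachable_sum_inr_iff {a b : W} :
    (G ⊕g H).Reachable (.inr a) (.inr b) ↔ H.Reachable a b :=
  Iso.sumComm.reachable_iff.symm.trans reachable_sum_inl_iff

lemma isBridge_sum_inl_iff {a b : V} :
    (G ⊕g H).IsBridge s(.inl a, .inl b) ↔ G.IsBridge s(a, b) := by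
  have sum_deleteEdges : (G ⊕g H).deleteEdges {s(.inl a, .inl b)} =
      G.deleteEdges {s(a, b)} ⊕g H := by
    ext (v | w) (v' | w') <;> simp
  rw [isBridge_iff, isBridge_iff, sum_deleteEdges, reachable_sum_inl_iff]

lemma isBridge_sum_inr_iff {a b : W} :
    (G ⊕g H).IsBridge s(.inr a, .inr b) ↔ H.IsBridge s(a, b) := by
  have sum_deleteEdges : (G ⊕g H).deleteEdges {s(.inr a, .inr b)} =
      G ⊕g H.deleteEdges {s(a, b)} := by
    ext (v | w) (v' | w') <;> simp
  rw [isBridge_iff, isBridge_iff, sum_deleteEdges, reachable_sum_inr_iff]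

lemma isAcyclic_sum_iff : (G ⊕g H).IsAcyclic ↔ G.IsAcyclic ∧ H.IsAcyclic := by
  refine ⟨fun h ↦ ⟨h.embedding Embedding.sumInl, h.embedding Embedding.sumInr⟩, ?_⟩
  simp only [isAcyclic_iff_forall_adj_isBridge]
  rintro ⟨hG, hH⟩ (v | w) (v' | w') hadj
  · exact isBridge_sum_inl_iff.2 (hG (sum_adj_inl.1 hadj))
  · exact absurd hadj (not_adj_sum_inl_inr v w')
  · exact absurd hadj.symm (not_adj_sum_inl_inr v' w)
  · exact isBridge_sum_inr_iff.2 (hH (sum_adj_inr.1 hadj))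

lemma sum_le_iff {K : SimpleGraph (V ⊕ W)} :
    G ⊕g H ≤ K ↔ G ≤ K.comap Sum.inl ∧ H ≤ K.comap Sum.inr := by
  refine ⟨fun h ↦ ⟨fun _ _ hadj ↦ h (sum_adj_inl.2 hadj),
    fun _ _ hadj ↦ h (sum_adj_inr.2 hadj)⟩, ?_⟩
  rintro ⟨hG, hH⟩ (v | w) (v' | w') hadj
  · exact hG (sum_adj_inl.1 hadj)
  · exact absurd hadj (not_adj_sum_inl_inr v w')
  · exact absurd hadj.symm (not_adj_sum_inl_inr v' w)
  · exact hH (sum_adj_inr.1 hadj)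

lemma eq_sum_comap_of_not_adj_inl_inr {K : SimpleGraph (V ⊕ W)}
    (h : ∀ v w, ¬ K.Adj (.inl v) (.inr w)) : K = K.comap Sum.inl ⊕g K.comap Sum.inr := by
  ext (v | w) (v' | w') <;> simp [h, K.adj_comm (.inr _) (.inl _)]

lemma ncard_edgeSet_sum (hG : G.edgeSet.Finite) (hH : H.edgeSet.Finite) :
    (G ⊕g H).edgeSet.ncard = G.edgeSet.ncard + H.edgeSet.ncard := by
  have := hG.to_subtype
  have := hH.to_subtype
  simp only [← Nat.card_coe_set_eq, Nat.card_congr edgeSetSumEquiv, Nat.card_sum]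

lemma fdeg_sum_inl (v : V) : fdeg (G ⊕g H) (.inl v) = fdeg G v := by
  rw [fdeg, neighborSet_sum_inl, Set.ncard_image_of_injective _ Sum.inl_injective, fdeg]

lemma fdeg_sum_inr (w : W) : fdeg (G ⊕g H) (.inr w) = fdeg H w := by
  rw [fdeg, neighborSet_sum_inr, Set.ncard_image_of_injective _ Sum.inr_injective, fdeg]

end Sum

section Degree

variable {V : Type*} {F : SimpleGraph V} {v w x : V}

lemma exists_adj_of_odd_fdeg (h : Odd (fdeg F v)) : ∃ w, F.Adj v w :=
  Set.nonempty_of_ncard_ne_zero h.pos.ne'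

lemma adj_of_odd_fdeg_of_neighborSet_subset_singleton (hodd : Odd (fdeg F v))
    (h : F.neighborSet v ⊆ {w}) : F.Adj v w := by
  obtain ⟨w', hadj⟩ := exists_adj_of_odd_fdeg hodd
  exact h hadj ▸ hadj

lemma not_adj_of_odd_fdeg_of_neighborSet_subset_pair (hodd : Odd (fdeg F v))
    (h : F.neighborSet v ⊆ {w, x}) (hne : w ≠ x) (hw : F.Adj v w) : ¬ F.Adj v x := by
  intro hx
  have neighborSet_eq : F.neighborSet v = {w, x} := h.antisymm (Set.pair_subset hw hx)
  rw [fdeg, neighborSet_eq, Set.ncard_pair hne] at hodd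
  exact absurd hodd (by decide)

lemma fdeg_top [Finite V] : fdeg (⊤ : SimpleGraph V) v = Nat.card V - 1 := by
  rw [fdeg, neighborSet_top, Set.ncard_compl, Set.ncard_singleton]

end Degree

lemma ncard_edgeSet_top {V : Type*} [Fintype V] :
    (⊤ : SimpleGraph V).edgeSet.ncard = (Fintype.card V).choose 2 := by
  classical
  rw [← coe_edgeFinset, Set.ncard_coe_finset, card_edgeFinset_top_eq_card_choose_two]

lemma eq_top_of_adj_zero_one {H : SimpleGraph (Fin 2)} (h : H.Adj 0 1) : H = ⊤ := by
  ext i j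
  fin_cases i <;> fin_cases j <;> simp [h, h.symm]

/-- `F` is a 0-perfect forest of `G`: a semiperfect spanning forest all of whose vertices have odd
degree. -/
def IsZeroPerfectForest {V : Type*} (G F : SimpleGraph V) : Prop :=
  IsSemiperfectForest G F ∧ ∀ v, Odd (fdeg F v)

section Forest

variable {V W : Type*}

lemma isSemiperfectForest_self_iff {G : SimpleGraph V} :
    IsSemiperfectForest G G ↔ G.IsAcyclic :=
  ⟨fun h ↦ h.2.1, fun h ↦ ⟨le_rfl, h, fun _ _ _ hadj ↦ hadj⟩⟩

lemma isSemiperfectForest_sum_iff {G : SimpleGraph (V ⊕ W)} {F : SimpleGraph V}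
    {K : SimpleGraph W} :
    IsSemiperfectForest G (F ⊕g K) ↔
      IsSemiperfectForest (G.comap Sum.inl) F ∧ IsSemiperfectForest (G.comap Sum.inr) K := by
  simp only [IsSemiperfectForest, sum_le_iff, isAcyclic_sum_iff, Sum.forall,
    reachable_sum_inl_iff, reachable_sum_inr_iff, sum_adj_inl, sum_adj_inr, comap_adj,
    not_reachable_sum_inl_inr, reachable_comm (u := Sum.inr _) (v := Sum.inl _),
    false_imp_iff, implies_true, and_true, true_and, and_and_and_comm]

lemma isZeroPerfectForest_sum_iff {G : SimpleGraph (V ⊕ W)} {F : SimpleGraph V}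
    {K : SimpleGraph W} :
    IsZeroPerfectForest G (F ⊕g K) ↔
      IsZeroPerfectForest (G.comap Sum.inl) F ∧ IsZeroPerfectForest (G.comap Sum.inr) K := by
  simp only [IsZeroPerfectForest, isSemiperfectForest_sum_iff, Sum.forall, fdeg_sum_inl,
    fdeg_sum_inr, and_and_and_comm]

lemma isZeroPerfectForest_top_fin_two :
    IsZeroPerfectForest (⊤ : SimpleGraph (Fin 2)) ⊤ :=
  ⟨isSemiperfectForest_self_iff.2 (.of_card_le_two (by simp)), fun _ ↦ by simp [fdeg_top]⟩

lemma IsZeroPerfectForest.ncard_edgeSet_pos [Finite V] [Nonempty V] {G F : SimpleGraph V}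
    (h : IsZeroPerfectForest G F) : 0 < F.edgeSet.ncard := by
  obtain ⟨w, hadj⟩ := exists_adj_of_odd_fdeg (h.2 (Classical.arbitrary V))
  exact (Set.ncard_pos).2 ⟨s(_, w), hadj⟩

end Forest

section AddTwoVerts

variable {V : Type*} {G : SimpleGraph V} {u : V}

lemma comap_inl_addTwoVerts : (addTwoVerts G u).comap Sum.inl = G := by
  ext a b
  simp only [addTwoVerts, comap_adj, fromEdgeSet_adj, Set.mem_union,
    Set.mem_ofPred_eq, Set.mem_insert_iff, Set.mem_singleton_iff]
  constructor
  · rintro ⟨⟨c, d, hadj, he⟩ | he | he, -⟩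
    · rcases Sym2.eq_iff.1 he with ⟨⟨⟩, ⟨⟩⟩ | ⟨⟨⟩, ⟨⟩⟩
      exacts [hadj, hadj.symm]
    all_goals simp at he
  · exact fun hadj ↦ ⟨.inl ⟨a, b, hadj, rfl⟩, Sum.inl_injective.ne hadj.ne⟩

lemma comap_inr_addTwoVerts : (addTwoVerts G u).comap Sum.inr = ⊤ :=
  eq_top_of_adj_zero_one (by simp [addTwoVerts])

lemma addTwoVerts_adj_inl_inr {a : V} {i : Fin 2} :
    (addTwoVerts G u).Adj (.inl a) (.inr i) ↔ a = u ∧ i = 1 := by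
  simp [addTwoVerts, and_comm]

lemma neighborSet_addTwoVerts_inr_zero :
    (addTwoVerts G u).neighborSet (.inr 0) = {.inr 1} := by
  ext (a | i)
  · simp [addTwoVerts]
  · fin_cases i <;> simp [addTwoVerts]

lemma neighborSet_addTwoVerts_inr_one :
    (addTwoVerts G u).neighborSet (.inr 1) = {.inr 0, .inl u} := by
  ext (a | i)
  · simp [addTwoVerts]
  · fin_cases i <;> simp [addTwoVerts]

lemma eq_sum_top_of_le_addTwoVerts_of_odd_fdeg {F : SimpleGraph (V ⊕ Fin 2)}
    (hle : F ≤ addTwoVerts G u) (hodd : ∀ i, Odd (fdeg F (.inr i))) :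
    F = F.comap Sum.inl ⊕g ⊤ := by
  have hxy : F.Adj (.inr 0) (.inr 1) :=
    adj_of_odd_fdeg_of_neighborSet_subset_singleton (hodd 0)
      (neighborSet_addTwoVerts_inr_zero (G := G) (u := u) ▸ fun _ hadj ↦ hle hadj)
  have hyu : ¬ F.Adj (.inr 1) (.inl u) :=
    not_adj_of_odd_fdeg_of_neighborSet_subset_pair (hodd 1)
      (neighborSet_addTwoVerts_inr_one (G := G) (u := u) ▸ fun _ hadj ↦ hle hadj)
      (by simp) hxy.symm
  have not_adj_inl_inr : ∀ a i, ¬ F.Adj (.inl a) (.inr i) := by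
    intro a i hadj
    obtain ⟨rfl, rfl⟩ := addTwoVerts_adj_inl_inr.1 (hle hadj)
    exact hyu hadj.symm
  have comap_inr_eq_top : F.comap Sum.inr = ⊤ := eq_top_of_adj_zero_one hxy
  exact comap_inr_eq_top ▸ eq_sum_comap_of_not_adj_inl_inr not_adj_inl_inr

lemma isZeroPerfectForest_addTwoVerts_sum_top_iff {F : SimpleGraph V} :
    IsZeroPerfectForest (addTwoVerts G u) (F ⊕g ⊤) ↔ IsZeroPerfectForest G F := by
  rw [isZeroPerfectForest_sum_iff, comap_inl_addTwoVerts, comap_inr_addTwoVerts,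
    and_iff_left isZeroPerfectForest_top_fin_two]

lemma isZeroPerfectForest_addTwoVerts_iff {F' : SimpleGraph (V ⊕ Fin 2)} :
    IsZeroPerfectForest (addTwoVerts G u) F' ↔
      ∃ F, IsZeroPerfectForest G F ∧ F' = F ⊕g ⊤ := by
  constructor
  · intro h
    have hF' := eq_sum_top_of_le_addTwoVerts_of_odd_fdeg h.1.1 fun i ↦ h.2 (.inr i)
    exact ⟨_, isZeroPerfectForest_addTwoVerts_sum_top_iff.1 (hF' ▸ h), hF'⟩
  · rintro ⟨F, hF, rfl⟩
    exact isZeroPerfectForest_addTwoVerts_sum_top_iff.2 hF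

end AddTwoVerts

theorem zero_perfect_forest_edge_count_transfer_general {V : Type*} [Fintype V]
    (G : SimpleGraph V) (u : V) (k : ℕ) :
    (∃ F : SimpleGraph V, IsSemiperfectForest G F ∧ (∀ v : V, Odd (fdeg F v)) ∧
        F.edgeSet.ncard = Fintype.card V - k) ↔
    (∃ F' : SimpleGraph (V ⊕ Fin 2), IsSemiperfectForest (addTwoVerts G u) F' ∧
        (∀ v, Odd (fdeg F' v)) ∧
        F'.edgeSet.ncard = Fintype.card (V ⊕ Fin 2) - (k + 1)) := by
  have edge_count_iff {F : SimpleGraph V} (hF : IsZeroPerfectForest G F) :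
      F.edgeSet.ncard = Fintype.card V - k ↔
        (F ⊕g (⊤ : SimpleGraph (Fin 2))).edgeSet.ncard =
          Fintype.card (V ⊕ Fin 2) - (k + 1) := by
    have : Nonempty V := ⟨u⟩
    -- Positivity rules out `|V| < k`, where the truncated subtraction on the left is `0`.
    have edges_pos := hF.ncard_edgeSet_pos
    rw [ncard_edgeSet_sum (Set.toFinite _) (Set.toFinite _), ncard_edgeSet_top,
      Fintype.card_sum, Fintype.card_fin, Nat.choose_self]
    omega
  constructor
  · rintro ⟨F, hsemi, hodd, hcard⟩
    have hF : IsZeroPerfectForest G F := ⟨hsemi, hodd⟩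
    obtain ⟨hsemi', hodd'⟩ := isZeroPerfectForest_addTwoVerts_iff (u := u).2 ⟨F, hF, rfl⟩
    exact ⟨F ⊕g ⊤, hsemi', hodd', (edge_count_iff hF).1 hcard⟩
  · rintro ⟨F', hsemi', hodd', hcard⟩
    obtain ⟨F, hF, rfl⟩ := isZeroPerfectForest_addTwoVerts_iff.1 ⟨hsemi', hodd'⟩
    exact ⟨F, hF.1, hF.2, (edge_count_iff hF).2 hcard⟩

/-- Let `G` be a connected graph, `u ∈ V(G)`, and let `G'` be obtained from `G` by adding
two new vertices `x, y` and the edges `xy` and `yu`. For any `k ≥ 0`, `G` has a 0-perfect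
forest with `|V(G)| − k` edges iff `G'` has a 0-perfect forest with `|V(G')| − (k+1)` edges. -/
theorem zero_perfect_forest_edge_count_transfer {V : Type*} [Fintype V]
    (G : SimpleGraph V) (hG : G.Connected) (u : V) (k : ℕ) :
    (∃ F : SimpleGraph V, IsSemiperfectForest G F ∧ (∀ v : V, Odd (fdeg F v)) ∧
        F.edgeSet.ncard = Fintype.card V - k) ↔
    (∃ F' : SimpleGraph (V ⊕ Fin 2), IsSemiperfectForest (addTwoVerts G u) F' ∧
        (∀ v, Odd (fdeg F' v)) ∧
        F'.edgeSet.ncard = Fintype.card (V ⊕ Fin 2) - (k + 1)) :=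
  zero_perfect_forest_edge_count_transfer_general G u k
end

section
/- Let G be a 2-connected graph and let u, v, w be three distinct vertices of G. Then there exists a path in G from u to v that passes through w. -/
open SimpleGraph

/-!
The set of vertices lying on some path from `u` to `v` is closed under adjacency: if the path `p`
passes through `w` and `z` is a neighbour of `w`, follow the edge `wz` and then a walk avoiding `w`
until it first meets `p`, at `x` say. Replacing the segment of `p` between `w` and `x` by this
detour gives a path through `z`. As `G` is connected, every vertex lies on a path from `u` to `v`.
-/

section Paths

variable {V : Type*} {G : SimpleGraph V} {u v w : V}

lemma isPath_append_iff (p : G.Walk u v) (q : G.Walk v w) :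
    (p.append q).IsPath ↔
      p.IsPath ∧ q.IsPath ∧ ∀ y ∈ p.support, y ∈ q.support → y = v := by
  constructor
  · intro hpq
    refine ⟨hpq.of_append_left, hpq.of_append_right, fun y hyp hyq => ?_⟩
    by_contra hyv
    exact hpq.ne_of_mem_support_of_append hyv hyp hyq rfl
  · rintro ⟨hp, hq, hpq⟩
    have hq_nodup : (v :: q.support.tail).Nodup := by
      rw [Walk.cons_tail_support]
      exact hq.support_nodup
    rw [Walk.isPath_def, Walk.support_append, List.nodup_append']
    refine ⟨hp.support_nodup, hq_nodup.of_cons, fun y hyp hyq => hq_nodup.notMem ?_⟩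
    exact hpq y hyp (List.mem_of_mem_tail hyq) ▸ hyq

lemma exists_walk_support_subset_of_preconnected_induce {s : Set V}
    (hs : (G.induce s).Preconnected) (hu : u ∈ s) (hv : v ∈ s) :
    ∃ p : G.Walk u v, ∀ y ∈ p.support, y ∈ s := by
  obtain ⟨q⟩ := hs ⟨u, hu⟩ ⟨v, hv⟩
  refine ⟨q.map (Embedding.induce s).toHom, fun y hy => ?_⟩
  obtain ⟨y', -, rfl⟩ := List.mem_map.mp (Walk.support_map _ q ▸ hy)
  exact y'.2

lemma exists_isPath_first_mem {s : Set V} (p : G.Walk u v) (hv : v ∈ s) :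
    ∃ x ∈ s, ∃ q : G.Walk u x, q.IsPath ∧ q.support ⊆ p.support ∧
      ∀ y ∈ q.support, y ∈ s → y = x := by
  classical
  let hits : Finset V := {y ∈ p.support.toFinset | y ∈ s}
  have mem_hits (y : V) : y ∈ hits ↔ y ∈ p.support ∧ y ∈ s := by simp [hits]
  have v_mem_hits : v ∈ hits := (mem_hits v).mpr ⟨p.end_mem_support, hv⟩
  obtain ⟨x, hx, hxp, hfirst⟩ := p.exists_mem_support_forall_mem_support_imp_eq hits
    ⟨v, Finset.mem_filter.mpr ⟨v_mem_hits, p.end_mem_support⟩⟩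
  have hsub : (p.takeUntil x hxp).support ⊆ p.support := p.support_takeUntil_subset_support hxp
  have hbypass := (p.takeUntil x hxp).support_bypass_subset_support
  exact ⟨x, ((mem_hits x).mp hx).2, (p.takeUntil x hxp).bypass, Walk.bypass_isPath _,
    fun y hy => hsub (hbypass hy),
    fun y hy hys => hfirst y ((mem_hits y).mpr ⟨hsub (hbypass hy), hys⟩) (hbypass hy)⟩

end Paths

/-- An ear of the vertex set `s`: a nontrivial path whose vertices in `s` are exactly its two ends.
A single edge between two vertices of `s` counts as an ear. -/
structure IsEar {V : Type*} {G : SimpleGraph V} (s : Set V) {a b : V} (r : G.Walk a b) : Prop where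
  isPath : r.IsPath
  ne : a ≠ b
  start_mem : a ∈ s
  end_mem : b ∈ s
  eq_or_eq_of_mem : ∀ y ∈ r.support, y ∈ s → y = a ∨ y = b

namespace IsEar

variable {V : Type*} {G : SimpleGraph V} {s : Set V} {u v a b : V}

lemma reverse {r : G.Walk a b} (hr : IsEar s r) : IsEar s r.reverse where
  isPath := hr.isPath.reverse
  ne := hr.ne.symm
  start_mem := hr.end_mem
  end_mem := hr.start_mem
  eq_or_eq_of_mem y hy hys := (hr.eq_or_eq_of_mem y (by simpa using hy) hys).symm

lemma isPath_append_append {p₁ : G.Walk u a} {p₂ : G.Walk a b} {p₃ : G.Walk b v} {r : G.Walk a b}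
    (hp : (p₁.append (p₂.append p₃)).IsPath)
    (hr : IsEar {y | y ∈ (p₁.append (p₂.append p₃)).support} r) :
    (p₁.append (r.append p₃)).IsPath := by
  have hends (y : V) (hyr : y ∈ r.support) (hy : y ∈ p₁.support ∨ y ∈ p₃.support) :
      y = a ∨ y = b := by
    refine hr.eq_or_eq_of_mem y hyr ?_
    simp only [Set.mem_ofPred_eq, Walk.mem_support_append_iff]
    tauto
  simp only [isPath_append_iff, Walk.mem_support_append_iff] at hp ⊢
  obtain ⟨hp₁, ⟨-, hp₃, h₂₃⟩, h₁⟩ := hp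
  have hb₁ : b ∉ p₁.support := fun hb => hr.ne (h₁ b hb (.inr p₃.start_mem_support)).symm
  have ha₃ : a ∉ p₃.support := fun ha => hr.ne (h₂₃ a p₂.start_mem_support ha)
  refine ⟨hp₁, ⟨hr.isPath, hp₃, fun y hyr hy₃ => ?_⟩, fun y hy₁ hy => ?_⟩
  · exact (hends y hyr (.inr hy₃)).resolve_left fun hya => ha₃ (hya ▸ hy₃)
  · rcases hy with hyr | hy₃
    · exact (hends y hyr (.inl hy₁)).resolve_right fun hyb => hb₁ (hyb ▸ hy₁)
    · exact h₁ y hy₁ (.inr hy₃)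

lemma exists_isPath_support_subset {p : G.Walk u v} {r : G.Walk a b}
    (hr : IsEar {y | y ∈ p.support} r) (hp : p.IsPath) :
    ∃ q : G.Walk u v, q.IsPath ∧ r.support ⊆ q.support := by
  obtain ⟨p₁, p', -, -, rfl⟩ := hp.mem_support_iff_exists_append.mp hr.start_mem
  rcases (Walk.mem_support_append_iff _ _).mp hr.end_mem with hb | hb
  · obtain ⟨p₀, p₂, -, -, rfl⟩ := hp.of_append_left.mem_support_iff_exists_append.mp hb
    rw [← Walk.append_assoc] at hp hr
    refine ⟨_, hr.reverse.isPath_append_append hp, fun y hy => ?_⟩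
    simp [hy]
  · obtain ⟨p₂, p₃, -, -, rfl⟩ := hp.of_append_right.mem_support_iff_exists_append.mp hb
    refine ⟨_, hr.isPath_append_append hp, fun y hy => ?_⟩
    simp [hy]

end IsEar

section DeleteVertex

variable {V : Type*} {G : SimpleGraph V} {u v w z t : V}

lemma exists_isEar_of_adj {s : Set V} (hdel : (G.induce {w}ᶜ).Preconnected) (hw : w ∈ s)
    (ht : t ∈ s) (htw : t ≠ w) (hwz : G.Adj w z) :
    ∃ x, ∃ r : G.Walk w x, IsEar s r ∧ z ∈ r.support := by
  obtain ⟨q, hq⟩ := exists_walk_support_subset_of_preconnected_induce hdel hwz.ne' htw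
  obtain ⟨x, hx, r, hr, hrq, hfirst⟩ := exists_isPath_first_mem q ht
  have hwr : w ∉ r.support := fun hw' => hq w (hrq hw') rfl
  refine ⟨x, .cons hwz r, ?_, by simp⟩
  exact
    { isPath := hr.cons hwr
      ne := fun hwx => hwr (hwx ▸ r.end_mem_support)
      start_mem := hw
      end_mem := hx
      eq_or_eq_of_mem := fun y hy hys => by
        rw [Walk.support_cons, List.mem_cons] at hy
        exact hy.imp_right fun hyr => hfirst y hyr hys }

lemma exists_isPath_mem_support_of_adj (hdel : (G.induce {w}ᶜ).Preconnected) (huv : u ≠ v)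
    {p : G.Walk u v} (hp : p.IsPath) (hw : w ∈ p.support) (hwz : G.Adj w z) :
    ∃ q : G.Walk u v, q.IsPath ∧ z ∈ q.support := by
  obtain ⟨t, ht, htw⟩ : ∃ t ∈ p.support, t ≠ w := by
    rcases huv.ne_or_ne w with huw | hvw
    · exact ⟨u, p.start_mem_support, huw⟩
    · exact ⟨v, p.end_mem_support, hvw⟩
  obtain ⟨x, r, hr, hzr⟩ := exists_isEar_of_adj (s := {y | y ∈ p.support}) hdel hw ht htw hwz
  obtain ⟨q, hq, hrq⟩ := hr.exists_isPath_support_subset hp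
  exact ⟨q, hq, hrq hzr⟩

end DeleteVertex

theorem two_connected_path_through_vertex_general {V : Type*} (G : SimpleGraph V)
    (hconn : G.Preconnected) (hdel : ∀ x : V, (G.induce {x}ᶜ).Preconnected)
    {u v : V} (huv : u ≠ v) (w : V) :
    ∃ p : G.Walk u v, p.IsPath ∧ w ∈ p.support := by
  induction (reachable_iff_reflTransGen u w).mp (hconn u w) with
  | refl =>
    obtain ⟨p, hp⟩ := (hconn u v).exists_isPath
    exact ⟨p, hp, p.start_mem_support⟩
  | tail _ hadj ih =>
    obtain ⟨p, hp, hmem⟩ := ih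
    exact exists_isPath_mem_support_of_adj (hdel _) huv hp hmem hadj

/-- Let `G` be a 2-connected graph (at least 3 vertices, connected, and connected after
deleting any single vertex) and let `u, v, w` be three distinct vertices of `G`.
Then there exists a path in `G` from `u` to `v` passing through `w`. -/
theorem two_connected_path_through_vertex {V : Type*} [Fintype V]
    (G : SimpleGraph V) (h3 : 3 ≤ Fintype.card V) (hconn : G.Connected)
    (h2 : ∀ x : V, (G.induce (({x} : Set V)ᶜ)).Connected)
    (u v w : V) (huv : u ≠ v) (huw : u ≠ w) (hvw : v ≠ w) :
    ∃ p : G.Walk u v, p.IsPath ∧ w ∈ p.support :=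
  two_connected_path_through_vertex_general G hconn.preconnected
    (fun x => (h2 x).preconnected) huv w
end

section
/- Let G be a 2-connected graph, let P be a path in G from u to v, and let w be an internal vertex of P (i.e., w ∈ V(P) and w ∉ {u, v}). Then G has a spanning tree T such that every edge of P is an edge of T and the degree of w in T equals 2. -/
open SimpleGraph

/-!
Any acyclic subgraph of a connected graph extends to a spanning tree. Apply this not to `G` but to
the graph obtained from `G` by discarding all edges at `w` outside `P`: it is still connected,
because `G - w` is connected and `P` joins `w` to it, and every subgraph of it containing `P` has
exactly the two edges of `P` at `w`.
-/

section

variable {V : Type*} {G H : SimpleGraph V} {u v w z : V}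

theorem isAcyclic_spanningCoe_toSubgraph_of_isPath {p : G.Walk u v} (hp : p.IsPath) :
    p.toSubgraph.spanningCoe.IsAcyclic := by
  induction p with
  | nil => exact isAcyclic_bot.anti fun _ _ h => by simp at h
  | @cons a b _ hab q ih =>
    obtain ⟨hq, ha⟩ := Walk.cons_isPath_iff .. |>.mp hp
    have isolated : q.toSubgraph.spanningCoe.neighborSet a = ∅ :=
      Set.eq_empty_of_forall_notMem fun _ h => ha (Walk.mem_support_of_adj_toSubgraph h)
    have not_reachable := not_reachable_of_neighborSet_left_eq_empty hab.ne isolated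
    rw [Walk.toSubgraph, Subgraph.sup_spanningCoe, Subgraph.spanningCoe_subgraphOfAdj, sup_comm]
    exact (ih hq).sup_edge_of_not_reachable not_reachable

theorem ncard_neighborSet_toSubgraph_eq_two_of_isPath {p : G.Walk u v} (hp : p.IsPath)
    (hw : w ∈ p.support) (hwu : w ≠ u) (hwv : w ≠ v) :
    (p.toSubgraph.neighborSet w).ncard = 2 := by
  obtain ⟨i, rfl, hi⟩ := Walk.mem_support_iff_exists_getVert.mp hw
  have hi_ne_zero : i ≠ 0 := fun h => hwu (by rw [h, Walk.getVert_zero])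
  have hi_ne_length : i ≠ p.length := fun h => hwv (by rw [h, Walk.getVert_length])
  exact hp.ncard_neighborSet_toSubgraph_internal_eq_two hi_ne_zero (hi.lt_of_ne hi_ne_length)

theorem connected_of_preconnected_induce_compl_singleton_of_adj
    (hG : (G.induce ({w}ᶜ : Set V)).Preconnected) (hwz : G.Adj w z) : G.Connected := by
  refine (connected_iff_exists_forall_reachable G).mpr ⟨w, fun a => ?_⟩
  obtain rfl | haw := eq_or_ne a w
  · exact Reachable.refl a
  · have hza : G.Reachable z a :=
      (hG ⟨z, hwz.ne'⟩ ⟨a, haw⟩).map (Embedding.induce _).toHom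
    exact hwz.reachable.trans hza

theorem connected_deleteIncidenceSet_sup_of_adj
    (hG : (G.induce ({w}ᶜ : Set V)).Preconnected) (hwz : H.Adj w z) :
    (G.deleteIncidenceSet w ⊔ H).Connected := by
  have hle : G.induce ({w}ᶜ : Set V) ≤ (G.deleteIncidenceSet w ⊔ H).induce {w}ᶜ := by
    rw [← G.induce_deleteIncidenceSet_of_notMem (Set.notMem_compl_iff.mpr (Set.mem_singleton w))]
    exact comap_monotone _ le_sup_left
  exact connected_of_preconnected_induce_compl_singleton_of_adj (hG.mono hle) (Or.inr hwz)

theorem neighborSet_deleteIncidenceSet_sup :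
    (G.deleteIncidenceSet w ⊔ H).neighborSet w = H.neighborSet w := by
  ext x
  simp [deleteIncidenceSet_adj]

theorem exists_isTree_le_neighborSet_eq_of_isAcyclic
    (hG : (G.induce ({w}ᶜ : Set V)).Preconnected) (hHG : H ≤ G) (hH : H.IsAcyclic)
    (hw : (H.neighborSet w).Nonempty) :
    ∃ T ≤ G, T.IsTree ∧ H ≤ T ∧ T.neighborSet w = H.neighborSet w := by
  obtain ⟨z, hwz⟩ := hw
  obtain ⟨T, hHT, hT_le, hT⟩ :=
    (connected_deleteIncidenceSet_sup_of_adj hG hwz).exists_isTree_le_of_le_of_isAcyclic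
      le_sup_right hH
  refine ⟨T, hT_le.trans (sup_le (G.deleteIncidenceSet_le w) hHG), hT, hHT, ?_⟩
  apply Set.Subset.antisymm _ (neighborSet_mono hHT w)
  exact (neighborSet_mono hT_le w).trans_eq neighborSet_deleteIncidenceSet_sup

theorem two_connected_spanning_tree_through_path_general
    (hG : (G.induce ({w}ᶜ : Set V)).Preconnected) {p : G.Walk u v} (hp : p.IsPath)
    (hw : w ∈ p.support) (hwu : w ≠ u) (hwv : w ≠ v) :
    ∃ T : SimpleGraph V, T ≤ G ∧ T.IsTree ∧
      (∀ e ∈ p.edges, e ∈ T.edgeSet) ∧ fdeg T w = 2 := by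
  have hdeg : (p.toSubgraph.spanningCoe.neighborSet w).ncard = 2 :=
    ncard_neighborSet_toSubgraph_eq_two_of_isPath hp hw hwu hwv
  obtain ⟨T, hTG, hT, hpT, hTw⟩ := exists_isTree_le_neighborSet_eq_of_isAcyclic hG
    p.toSubgraph.spanningCoe_le (isAcyclic_spanningCoe_toSubgraph_of_isPath hp)
    (Set.nonempty_of_ncard_ne_zero (by rw [hdeg]; exact two_ne_zero))
  refine ⟨T, hTG, hT, fun e he => ?_, by rw [fdeg, hTw, hdeg]⟩
  exact edgeSet_mono hpT (p.mem_edges_toSubgraph.mpr he)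

end

/-- Let `G` be a 2-connected graph (at least 3 vertices, connected, and connected after
deleting any single vertex), let `P` be a path in `G` from `u` to `v`, and let `w` be an
internal vertex of `P`. Then `G` has a spanning tree `T` containing every edge of `P`
in which `w` has degree exactly 2. -/
theorem two_connected_spanning_tree_through_path {V : Type*} [Fintype V]
    (G : SimpleGraph V) (h3 : 3 ≤ Fintype.card V) (hconn : G.Connected)
    (h2 : ∀ x : V, (G.induce (({x} : Set V)ᶜ)).Connected)
    (u v w : V) (p : G.Walk u v) (hp : p.IsPath)
    (hw : w ∈ p.support) (hwu : w ≠ u) (hwv : w ≠ v) :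
    ∃ T : SimpleGraph V, T ≤ G ∧ T.IsTree ∧
      (∀ e ∈ p.edges, e ∈ T.edgeSet) ∧ fdeg T w = 2 := by
  exact two_connected_spanning_tree_through_path_general (h2 w).preconnected hp hw hwu hwv
end
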